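/- arXiv:2005.01357 — 2 statements merged into one kernel-verified Lean document; each statement's English description precedes it below -/
import Mathlib

section
/- Assume (H1)–(H6). For every ω ∈ Ω, μ > Ã(ω), x ∈ ℝ and 0 ≤ t ≤ s, the reachable (sublevel) sets R_{μ,t}^ω = {y ∈ ℝ : m_μ(y,x,ω) ≤ t} satisfy dist_H(R_{μ,t}^ω, R_{μ,s}^ω) ≤ (s − t)/l_μ, where dist_H denotes the Hausdorff distance. -/
open MeasureTheory ProbabilityTheory Set Filter Topology

noncomputable section

variable {Ω : Type*}

/-! ### Viscosity solutions of stationary Hamilton-Jacobi equations -/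

/-- Viscosity subsolution of `G(Du, y) ≤ μ` on the set `U`. -/
def IsViscSubsol (G : ℝ → ℝ → ℝ) (μ : ℝ) (U : Set ℝ) (u : ℝ → ℝ) : Prop :=
  ∀ φ : ℝ → ℝ, ContDiff ℝ 1 φ → ∀ y₀ ∈ U,
    IsLocalMaxOn (fun y => u y - φ y) U y₀ → G (deriv φ y₀) y₀ ≤ μ

/-- Viscosity supersolution of `G(Du, y) ≥ μ` on the set `U`. -/
def IsViscSupersol (G : ℝ → ℝ → ℝ) (μ : ℝ) (U : Set ℝ) (u : ℝ → ℝ) : Prop :=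
  ∀ φ : ℝ → ℝ, ContDiff ℝ 1 φ → ∀ y₀ ∈ U,
    IsLocalMinOn (fun y => u y - φ y) U y₀ → μ ≤ G (deriv φ y₀) y₀

/-- Viscosity solution of `G(Du, y) = μ` on the set `U`. -/
def IsViscSol (G : ℝ → ℝ → ℝ) (μ : ℝ) (U : Set ℝ) (u : ℝ → ℝ) : Prop :=
  IsViscSubsol G μ U u ∧ IsViscSupersol G μ U u

/-- Globally Lipschitz real function. -/
def IsLip (v : ℝ → ℝ) : Prop := ∃ K : NNReal, LipschitzWith K v

/-- Assumptions (H1)–(H6) on a random Hamiltonian `H = H(p, y, ω)`. -/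
structure HamHyp [MeasurableSpace Ω] (H : ℝ → ℝ → Ω → ℝ) : Prop where
  meas : Measurable fun q : ℝ × ℝ × Ω => H q.1 q.2.1 q.2.2
  lip_p : ∃ K : NNReal, ∀ (y : ℝ) (ω : Ω), LipschitzWith K fun p => H p y ω
  bounds : ∃ c₀ C₀ γ : ℝ, 0 < c₀ ∧ 0 < C₀ ∧ 0 < γ ∧
    ∀ (p y : ℝ) (ω : Ω), -c₀ * |p + γ| ≤ H p y ω ∧ H p y ω ≤ C₀ * |p + γ|
  coercive : ∀ M : ℝ, ∃ R : ℝ, ∀ (p y : ℝ) (ω : Ω), R ≤ |p| → M ≤ H p y ω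
  modulus : ∃ w : ℝ → ℝ, Monotone w ∧ w 0 = 0 ∧ ContinuousAt w 0 ∧
    ∀ (p x y : ℝ) (ω : Ω), |H p y ω - H p x ω| ≤ w (|x - y| * (1 + |p|))
  convex_p : ∀ (y : ℝ) (ω : Ω), ConvexOn ℝ Set.univ fun p => H p y ω
  min_at_zero : ∀ (p y : ℝ) (ω : Ω), H 0 y ω ≤ H p y ω

/-- The stochastic flux limiter `Ã(ω)`: the smallest `μ` such that the equation
`H(Dv, y, ω) ≤ μ` admits a globally Lipschitz viscosity subsolution on `ℝ`. -/
def fluxLimiter (H : ℝ → ℝ → Ω → ℝ) (ω : Ω) : ℝ :=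
  sInf {μ : ℝ | ∃ v : ℝ → ℝ, IsLip v ∧ IsViscSubsol (fun p y => H p y ω) μ Set.univ v}

/-- The maximal subsolution `m_μ(y, x, ω)` of the metric problem. -/
def metricSol (H : ℝ → ℝ → Ω → ℝ) (μ : ℝ) (ω : Ω) (y x : ℝ) : ℝ :=
  sSup {r : ℝ | ∃ v : ℝ → ℝ, IsLip v ∧
    IsViscSubsol (fun p y => H p y ω) μ Set.univ v ∧ r = v y - v x}

/-! ### Stochastic framework -/

/-- Stationarity (H8) of a Hamiltonian with respect to a translation group `τ`. -/
def Stationary (τ : ℝ → Ω → Ω) (H : ℝ → ℝ → Ω → ℝ) : Prop :=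
  ∀ (p y z : ℝ) (ω : Ω), H p (y + z) ω = H p y (τ z ω)

/-- An ergodic group of measure-preserving transformations of `(Ω, F, P)`. -/
structure ErgodicSetup [MeasurableSpace Ω] (P : Measure Ω) (τ : ℝ → Ω → Ω) : Prop where
  meas : ∀ z, Measurable (τ z)
  preserving : ∀ z, MeasurePreserving (τ z) P P
  add : ∀ x z : ℝ, τ (x + z) = τ x ∘ τ z
  ergodic : ∀ A : Set Ω, MeasurableSet A → (∀ z, τ z ⁻¹' A = A) → P A = 0 ∨ P A = 1

/-- σ-algebra generated by the maps `ω ↦ H(p, y, ω)`, `y ∈ U`, `p ∈ ℝ`. -/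
def genSigma [MeasurableSpace Ω] (H : ℝ → ℝ → Ω → ℝ) (U : Set ℝ) : MeasurableSpace Ω :=
  ⨆ y ∈ U, ⨆ p : ℝ, MeasurableSpace.comap (fun ω => H p y ω) inferInstance

/-- Unit range of dependence (H9). -/
def UnitRangeDep [MeasurableSpace Ω] (P : Measure Ω) (H : ℝ → ℝ → Ω → ℝ) : Prop :=
  ∀ U V : Set ℝ, MeasurableSet U → MeasurableSet V →
    (∀ x ∈ U, ∀ y ∈ V, 1 ≤ |x - y|) →
    ProbabilityTheory.Indep (genSigma H U) (genSigma H V) P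

/-! ### The decompositions (H7-WFL) and (H7-ε) for a family `H ε` of Hamiltonians -/

/-- (H7-WFL). -/
def DecompWFL (HL HR : ℝ → ℝ → Ω → ℝ) (H : ℝ → ℝ → ℝ → Ω → ℝ) : Prop :=
  ∃ φ : ℝ → ℝ, ContDiff ℝ (⊤ : ℕ∞) φ ∧ Antitone φ ∧
    (∀ y : ℝ, y ≤ -1 → φ y = 1) ∧ (∀ y : ℝ, 1 ≤ y → φ y = 0) ∧
    ∀ (ε p y : ℝ) (ω : Ω), H ε p y ω = φ y * HL p y ω + (1 - φ y) * HR p y ω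

/-- (H7-ε). -/
def DecompEps (HL HR H0 : ℝ → ℝ → Ω → ℝ) (H : ℝ → ℝ → ℝ → Ω → ℝ) : Prop :=
  (∀ (p y : ℝ) (ω : Ω), HL p y ω ≤ H0 p y ω ∧ HR p y ω ≤ H0 p y ω) ∧
  ∃ ψ : ℝ → ℝ → ℝ,
    (∀ ε : ℝ, 0 < ε → ContDiff ℝ (⊤ : ℕ∞) (ψ ε) ∧
      (∀ y : ℝ, 2 / Real.sqrt ε < y → ψ ε y = 1) ∧
      (∀ y : ℝ, y < 1 / Real.sqrt ε → ψ ε y = 0)) ∧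
    ∀ ε : ℝ, 0 < ε → ∀ (p y : ℝ) (ω : Ω), H ε p y ω =
      ψ ε (-y) * HL p y ω + (1 - ψ ε (-y)) * (1 - ψ ε y) * H0 p y ω + ψ ε y * HR p y ω

/-! ### Effective Hamiltonians -/

/-- The effective Hamiltonian `H̄_α(p)` at a fixed `ω`:
`inf` of the `μ` for which `H_α(p + Dv, y, ω) ≤ μ` has a Lipschitz, strictly sublinear
viscosity subsolution. -/
def effectiveHam (Hα : ℝ → ℝ → Ω → ℝ) (ω : Ω) (p : ℝ) : ℝ :=
  sInf {μ : ℝ | ∃ v : ℝ → ℝ, IsLip v ∧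
    Tendsto (fun y => v y / |y|) (cocompact ℝ) (𝓝 0) ∧
    IsViscSubsol (fun q y => Hα q y ω) μ Set.univ fun y => p * y + v y}

/-- Non-decreasing part of a (convex coercive) Hamiltonian. -/
def Hplus (G : ℝ → ℝ) (p : ℝ) : ℝ := if 0 ≤ p then G p else sInf (Set.range G)

/-- Non-increasing part of a (convex coercive) Hamiltonian. -/
def Hminus (G : ℝ → ℝ) (p : ℝ) : ℝ := if p ≤ 0 then G p else sInf (Set.range G)

/-! ### The approximated corrector equation -/

/-- Viscosity solution of `δ v + G(Dv, y) = 0` on `ℝ`. -/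
def IsViscSolDelta (G : ℝ → ℝ → ℝ) (δ : ℝ) (v : ℝ → ℝ) : Prop :=
  (∀ φ : ℝ → ℝ, ContDiff ℝ 1 φ → ∀ y₀ : ℝ, IsLocalMax (fun y => v y - φ y) y₀ →
    δ * v y₀ + G (deriv φ y₀) y₀ ≤ 0) ∧
  (∀ φ : ℝ → ℝ, ContDiff ℝ 1 φ → ∀ y₀ : ℝ, IsLocalMin (fun y => v y - φ y) y₀ →
    0 ≤ δ * v y₀ + G (deriv φ y₀) y₀)

/-! ### Evolutive Hamilton–Jacobi equations -/

/-- Viscosity subsolution of `u_t + G(Du, y) = 0` on `(0,T) × ℝ`. -/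
def IsViscSubsolEvol (G : ℝ → ℝ → ℝ) (T : ℝ) (u : ℝ → ℝ → ℝ) : Prop :=
  ∀ φ : ℝ × ℝ → ℝ, ContDiff ℝ 1 φ → ∀ t₀ x₀ : ℝ, 0 < t₀ → t₀ < T →
    IsLocalMaxOn (fun q : ℝ × ℝ => u q.1 q.2 - φ q) (Set.Ioo 0 T ×ˢ Set.univ) (t₀, x₀) →
    deriv (fun t => φ (t, x₀)) t₀ + G (deriv (fun x => φ (t₀, x)) x₀) x₀ ≤ 0

/-- Viscosity supersolution of `u_t + G(Du, y) = 0` on `(0,T) × ℝ`. -/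
def IsViscSupersolEvol (G : ℝ → ℝ → ℝ) (T : ℝ) (u : ℝ → ℝ → ℝ) : Prop :=
  ∀ φ : ℝ × ℝ → ℝ, ContDiff ℝ 1 φ → ∀ t₀ x₀ : ℝ, 0 < t₀ → t₀ < T →
    IsLocalMinOn (fun q : ℝ × ℝ => u q.1 q.2 - φ q) (Set.Ioo 0 T ×ˢ Set.univ) (t₀, x₀) →
    0 ≤ deriv (fun t => φ (t, x₀)) t₀ + G (deriv (fun x => φ (t₀, x)) x₀) x₀

/-! ### The junction problem -/

/-- Test functions for the junction problem: continuous, `C¹` on each side of the junction. -/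
def IsPiecewiseC1 (φ : ℝ × ℝ → ℝ) : Prop :=
  Continuous φ ∧ ContDiffOn ℝ 1 φ {q : ℝ × ℝ | q.2 ≤ 0} ∧
    ContDiffOn ℝ 1 φ {q : ℝ × ℝ | 0 ≤ q.2}

/-- Viscosity subsolution of the junction problem with flux limiter `A`. -/
def IsJunctionSubsol (HLb HRb : ℝ → ℝ) (A T : ℝ) (u : ℝ → ℝ → ℝ) : Prop :=
  ∀ φ : ℝ × ℝ → ℝ, IsPiecewiseC1 φ → ∀ t₀ x₀ : ℝ, 0 < t₀ → t₀ < T →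
    IsLocalMaxOn (fun q : ℝ × ℝ => u q.1 q.2 - φ q) (Set.Ioo 0 T ×ˢ Set.univ) (t₀, x₀) →
    (x₀ < 0 → deriv (fun t => φ (t, x₀)) t₀ + HLb (deriv (fun x => φ (t₀, x)) x₀) ≤ 0) ∧
    (0 < x₀ → deriv (fun t => φ (t, x₀)) t₀ + HRb (deriv (fun x => φ (t₀, x)) x₀) ≤ 0) ∧
    (x₀ = 0 → deriv (fun t => φ (t, 0)) t₀ +
      max A (max (Hplus HLb (derivWithin (fun x => φ (t₀, x)) (Set.Iic 0) 0))
        (Hminus HRb (derivWithin (fun x => φ (t₀, x)) (Set.Ici 0) 0))) ≤ 0)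

/-- Viscosity supersolution of the junction problem with flux limiter `A`. -/
def IsJunctionSupersol (HLb HRb : ℝ → ℝ) (A T : ℝ) (u : ℝ → ℝ → ℝ) : Prop :=
  ∀ φ : ℝ × ℝ → ℝ, IsPiecewiseC1 φ → ∀ t₀ x₀ : ℝ, 0 < t₀ → t₀ < T →
    IsLocalMinOn (fun q : ℝ × ℝ => u q.1 q.2 - φ q) (Set.Ioo 0 T ×ˢ Set.univ) (t₀, x₀) →
    (x₀ < 0 → 0 ≤ deriv (fun t => φ (t, x₀)) t₀ + HLb (deriv (fun x => φ (t₀, x)) x₀)) ∧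
    (0 < x₀ → 0 ≤ deriv (fun t => φ (t, x₀)) t₀ + HRb (deriv (fun x => φ (t₀, x)) x₀)) ∧
    (x₀ = 0 → 0 ≤ deriv (fun t => φ (t, 0)) t₀ +
      max A (max (Hplus HLb (derivWithin (fun x => φ (t₀, x)) (Set.Iic 0) 0))
        (Hminus HRb (derivWithin (fun x => φ (t₀, x)) (Set.Ici 0) 0))))

/-- Solution of the limit junction problem with initial datum `u₀`. -/
def IsJunctionSol (HLb HRb : ℝ → ℝ) (A T : ℝ) (u₀ : ℝ → ℝ) (u : ℝ → ℝ → ℝ) : Prop :=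
  ContinuousOn (fun q : ℝ × ℝ => u q.1 q.2) (Set.Ico 0 T ×ˢ Set.univ) ∧
  (∀ y, u 0 y = u₀ y) ∧
  IsJunctionSubsol HLb HRb A T u ∧ IsJunctionSupersol HLb HRb A T u

/-! ### Helper lemmas -/

/-- Structural facts on a frozen Hamiltonian. -/
structure GoodHam (G : ℝ → ℝ → ℝ) : Prop where
  cont_p : ∀ y, Continuous fun p => G p y
  cont_y : ∀ p, Continuous fun y => G p y
  conv : ∀ y, ConvexOn ℝ Set.univ fun p => G p y
  min0 : ∀ p y, G 0 y ≤ G p y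

/-- One-sided slope condition. -/
def UpSlope (G : ℝ → ℝ → ℝ) (μ : ℝ) (v : ℝ → ℝ) : Prop :=
  ∀ y₀ p : ℝ, 0 < p → μ < G p y₀ → ∃ δ > 0, ∀ a b : ℝ, y₀ - δ < a → a ≤ b → b < y₀ + δ →
    v b - v a ≤ p * (b - a)

/-- The other one-sided slope condition. -/
def DownSlope (G : ℝ → ℝ → ℝ) (μ : ℝ) (v : ℝ → ℝ) : Prop :=
  ∀ y₀ p : ℝ, 0 < p → μ < G (-p) y₀ → ∃ δ > 0, ∀ a b : ℝ, y₀ - δ < a → a ≤ b → b < y₀ + δ →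
    v a - v b ≤ p * (b - a)

lemma goodHam_of_hamHyp [MeasurableSpace Ω] (H : ℝ → ℝ → Ω → ℝ) (hH : HamHyp H) (ω : Ω) :
    GoodHam (fun p y => H p y ω) where
  cont_p := by
    intro y
    obtain ⟨K, hK⟩ := hH.lip_p
    exact (hK y ω).continuous
  cont_y := by
    intro p
    obtain ⟨w, _, hw0, hwc, hw⟩ := hH.modulus
    rw [continuous_iff_continuousAt]
    intro x
    rw [ContinuousAt, tendsto_iff_dist_tendsto_zero]
    have h1 : Tendsto (fun y : ℝ => |x - y| * (1 + |p|)) (𝓝 x) (𝓝 0) := by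
      have : Continuous (fun y : ℝ => |x - y| * (1 + |p|)) := by fun_prop
      simpa using this.tendsto x
    have h2 : Tendsto (fun y : ℝ => w (|x - y| * (1 + |p|))) (𝓝 x) (𝓝 0) := by
      have := hwc.tendsto.comp h1
      rwa [hw0] at this
    refine squeeze_zero (fun _ => dist_nonneg) (fun y => ?_) h2
    rw [Real.dist_eq]
    exact hw p x y ω
  conv := fun y => hH.convex_p y ω
  min0 := fun p y => hH.min_at_zero p y ω

lemma GoodHam.mono {G : ℝ → ℝ → ℝ} (hG : GoodHam G) {p q y : ℝ} (hp : 0 < p) (hpq : p ≤ q) :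
    G p y ≤ G q y := by
  have hq : 0 < q := hp.trans_le hpq
  have h := (hG.conv y).2 (mem_univ 0) (mem_univ q)
    (show 0 ≤ 1 - p / q by rw [sub_nonneg, div_le_one hq]; exact hpq)
    (show 0 ≤ p / q by positivity) (by ring)
  simp only [smul_eq_mul, mul_zero, zero_add] at h
  rw [div_mul_cancel₀ p hq.ne'] at h
  have h0 := hG.min0 q y
  have : 0 ≤ 1 - p / q := by rw [sub_nonneg, div_le_one hq]; exact hpq
  nlinarith

lemma GoodHam.refl' {G : ℝ → ℝ → ℝ} (hG : GoodHam G) : GoodHam (fun p y => G (-p) (-y)) where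
  cont_p := fun y => (hG.cont_p (-y)).comp continuous_neg
  cont_y := fun p => (hG.cont_y (-p)).comp continuous_neg
  conv := by
    intro y
    refine ⟨convex_univ, fun a _ b _ s t hs ht hst => ?_⟩
    have := (hG.conv (-y)).2 (mem_univ (-a)) (mem_univ (-b)) hs ht hst
    have e : -(s • a + t • b) = s • (-a) + t • (-b) := by simp only [smul_eq_mul]; ring
    simp only [e]
    exact this
  min0 := by
    intro p y
    simpa using hG.min0 (-p) (-y)

lemma IsViscSubsol.refl' {G : ℝ → ℝ → ℝ} {μ : ℝ} {v : ℝ → ℝ} (h : IsViscSubsol G μ univ v) :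
    IsViscSubsol (fun p y => G (-p) (-y)) μ univ (fun y => v (-y)) := by
  intro φ hφ y₀ _ hmax
  have h1 := h (fun y => φ (-y)) (hφ.comp contDiff_neg) (-y₀) (mem_univ _) ?_
  · rw [deriv_comp_neg, neg_neg] at h1
    exact h1
  · rw [isLocalMaxOn_univ_iff] at hmax ⊢
    have ht : Tendsto (fun y : ℝ => -y) (𝓝 (-y₀)) (𝓝 y₀) := by
      have := (continuous_neg (G := ℝ)).tendsto (-y₀)
      rwa [neg_neg] at this
    have := ht.eventually hmax
    filter_upwards [this] with y hy
    simpa using hy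

/-- An interior maximum of `v - φ` on `[a, c]` gives a test point. -/
lemma visc_interior {G : ℝ → ℝ → ℝ} {μ : ℝ} {v : ℝ → ℝ} (hc : Continuous v)
    (h : IsViscSubsol G μ univ v) (φ : ℝ → ℝ) (hφ : ContDiff ℝ 1 φ) {a b c : ℝ}
    (hab : a ≤ b) (hbc : b ≤ c) (h1 : v a - φ a < v b - φ b) (h2 : v c - φ c < v b - φ b) :
    ∃ y, a < y ∧ y < c ∧ G (deriv φ y) y ≤ μ := by
  have hcont : Continuous fun y => v y - φ y := hc.sub hφ.continuous
  obtain ⟨y, hy, hmax⟩ := isCompact_Icc.exists_isMaxOn (nonempty_Icc.2 (hab.trans hbc))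
    hcont.continuousOn
  have hb := hmax ⟨hab, hbc⟩
  simp only [mem_ofPred_eq] at hb
  have hay : a < y := by
    rcases hy.1.eq_or_lt with e | e
    · subst e; linarith
    · exact e
  have hyc : y < c := by
    rcases hy.2.eq_or_lt with e | e
    · subst e; linarith
    · exact e
  refine ⟨y, hay, hyc, h φ hφ y (mem_univ _) ?_⟩
  rw [isLocalMaxOn_univ_iff]
  exact hmax.isLocalMax (Icc_mem_nhds hay hyc)

lemma visc_zero {G : ℝ → ℝ → ℝ} (hG : GoodHam G) {μ : ℝ} {v : ℝ → ℝ} (hc : Continuous v)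
    (h : IsViscSubsol G μ univ v) (y₀ : ℝ) : G 0 y₀ ≤ μ := by
  by_contra! hlt
  obtain ⟨δ, hδ, hball⟩ := Metric.eventually_nhds_iff.1
    ((hG.cont_y 0).continuousAt.eventually (lt_mem_nhds hlt))
  set K : ℝ := (|v (y₀ - δ) - v y₀| + |v (y₀ + δ) - v y₀| + 1) / δ ^ 2 with hK
  have hKδ : K * δ ^ 2 = |v (y₀ - δ) - v y₀| + |v (y₀ + δ) - v y₀| + 1 := by
    rw [hK]; field_simp
  have i1 := le_abs_self (v (y₀ - δ) - v y₀)
  have i2 := le_abs_self (v (y₀ + δ) - v y₀)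
  have i3 := abs_nonneg (v (y₀ - δ) - v y₀)
  have i4 := abs_nonneg (v (y₀ + δ) - v y₀)
  obtain ⟨y, hy1, hy2, hy⟩ := visc_interior hc h (fun y => K * (y - y₀) ^ 2) (by fun_prop)
    (a := y₀ - δ) (b := y₀) (c := y₀ + δ) (by linarith) (by linarith)
    (by
      simp only [sub_sub_cancel_left, neg_sq, sub_self, hKδ]
      linarith)
    (by
      simp only [add_sub_cancel_left, sub_self, hKδ]
      linarith)
  have := hball (y := y) (by rw [Real.dist_eq, abs_lt]; constructor <;> linarith)
  have := hG.min0 (deriv (fun y => K * (y - y₀) ^ 2) y) y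
  linarith

lemma visc_up {G : ℝ → ℝ → ℝ} (hG : GoodHam G) {μ : ℝ} {v : ℝ → ℝ} (hc : Continuous v)
    (h : IsViscSubsol G μ univ v) : UpSlope G μ v := by
  intro y₀ p hp hlt
  obtain ⟨δ, hδ, hball⟩ := Metric.eventually_nhds_iff.1
    ((hG.cont_y p).continuousAt.eventually (lt_mem_nhds hlt))
  refine ⟨δ, hδ, fun a b ha hab hb => ?_⟩
  by_contra! hcon
  have hab' : a < b := by
    rcases hab.eq_or_lt with e | e
    · subst e; simp at hcon
    · exact e
  obtain ⟨c, hbc, hcδ⟩ := exists_between hb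
  set ε : ℝ := (v b - v a - p * (b - a)) / 2 with hε
  have hεpos : 0 < ε := by rw [hε]; linarith
  have hba : 0 < b - a := by linarith
  have hr : 1 < (c - a) / (b - a) := by rw [one_lt_div hba]; linarith
  obtain ⟨n, hn⟩ := pow_unbounded_of_one_lt ((v c - v b - p * (c - b)) / ε + 1) hr
  have hn' : v c - v b - p * (c - b) + ε < ε * ((c - a) / (b - a)) ^ (n + 1) := by
    have h1 : ((c - a) / (b - a)) ^ n ≤ ((c - a) / (b - a)) ^ (n + 1) :=
      pow_le_pow_right₀ hr.le (Nat.le_succ n)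
    have h2 := mul_lt_mul_of_pos_left (hn.trans_le h1) hεpos
    have h3 : ε * ((v c - v b - p * (c - b)) / ε + 1) = v c - v b - p * (c - b) + ε := by
      field_simp
    linarith
  obtain ⟨y, hy1, hy2, hy⟩ := visc_interior hc h
    (fun y => p * y + ε * ((y - a) / (b - a)) ^ (n + 1)) (by fun_prop)
    (a := a) (b := b) (c := c) hab hbc.le
    (by
      simp only [sub_self, zero_div, div_self hba.ne', one_pow, ne_eq, Nat.succ_ne_zero,
        not_false_eq_true, zero_pow]
      linarith)
    (by
      simp only [div_self hba.ne', one_pow]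
      linarith)
  have hd : HasDerivAt (fun y => p * y + ε * ((y - a) / (b - a)) ^ (n + 1))
      (p * 1 + ε * (((n + 1 : ℕ) : ℝ) * ((y - a) / (b - a)) ^ n * (1 / (b - a)))) y := by
    have h1 : HasDerivAt (fun y => (y - a) / (b - a)) (1 / (b - a)) y :=
      ((hasDerivAt_id y).sub_const a).div_const (b - a)
    exact ((hasDerivAt_id y).const_mul p).add ((h1.pow (n + 1)).const_mul ε)
  rw [hd.deriv] at hy
  have hya : 0 < y - a := by linarith
  have hge : p ≤ p * 1 + ε * (((n + 1 : ℕ) : ℝ) * ((y - a) / (b - a)) ^ n * (1 / (b - a))) := by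
    have : 0 ≤ ε * (((n + 1 : ℕ) : ℝ) * ((y - a) / (b - a)) ^ n * (1 / (b - a))) := by positivity
    linarith
  have h5 := hG.mono (y := y) hp hge
  have := hball (y := y) (by rw [Real.dist_eq, abs_lt]; constructor <;> linarith)
  linarith

lemma visc_down {G : ℝ → ℝ → ℝ} (hG : GoodHam G) {μ : ℝ} {v : ℝ → ℝ} (hc : Continuous v)
    (h : IsViscSubsol G μ univ v) : DownSlope G μ v := by
  intro y₀ p hp hlt
  obtain ⟨δ, hδ, hd⟩ := visc_up hG.refl' (hc.comp continuous_neg) h.refl' (-y₀) p hp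
    (by simpa using hlt)
  refine ⟨δ, hδ, fun a b ha hab hb => ?_⟩
  have := hd (-b) (-a) (by linarith) (by linarith) (by linarith)
  simp only [Function.comp, neg_neg] at this
  linarith

lemma visc_of_slopes {G : ℝ → ℝ → ℝ} (hG : GoodHam G) {μ : ℝ} {v : ℝ → ℝ}
    (h0 : ∀ y, G 0 y ≤ μ) (hu : UpSlope G μ v) (hd : DownSlope G μ v) :
    IsViscSubsol G μ univ v := by
  intro φ hφ y₀ _ hmax
  rw [isLocalMaxOn_univ_iff] at hmax
  by_contra! hlt
  have hder : HasDerivAt φ (deriv φ y₀) y₀ :=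
    (hφ.differentiable (by norm_num) y₀).hasDerivAt
  have hslope := hasDerivAt_iff_tendsto_slope.1 hder
  generalize hp : deriv φ y₀ = p at *
  have hopen := Metric.eventually_nhds_iff.1
    ((hG.cont_p y₀).continuousAt.eventually (lt_mem_nhds hlt))
  obtain ⟨η, hη, hopen⟩ := hopen
  rcases lt_trichotomy p 0 with hneg | hzero | hpos
  · obtain ⟨q, hq1, hq2⟩ := exists_between (show max 0 (-p - η) < -p by
      rw [max_lt_iff]; constructor <;> linarith)
    rw [max_lt_iff] at hq1
    obtain ⟨δ, hδ, hdd⟩ := hd y₀ q hq1.1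
      (hopen (by rw [Real.dist_eq, abs_lt]; constructor <;> linarith))
    have e1 : ∀ᶠ y in 𝓝[>] y₀, slope φ y₀ y < -q :=
      (hslope.mono_left (nhdsWithin_mono _ (fun y (hy : y₀ < y) => hy.ne'))).eventually
        (gt_mem_nhds (by linarith))
    have e2 : ∀ᶠ y in 𝓝[>] y₀, v y - φ y ≤ v y₀ - φ y₀ := nhdsWithin_le_nhds hmax
    have e3 : ∀ᶠ y in 𝓝[>] y₀, y < y₀ + δ := nhdsWithin_le_nhds (gt_mem_nhds (by linarith))
    obtain ⟨y, h1, h2, h3, h4⟩ := (e1.and (e2.and (e3.and self_mem_nhdsWithin))).exists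
    have h4 : y₀ < y := h4
    have h5 := hdd y₀ y (by linarith) h4.le h3
    rw [slope_def_field, div_lt_iff₀ (by linarith)] at h1
    linarith
  · subst hzero
    exact absurd (h0 y₀) (not_le.2 hlt)
  · obtain ⟨q, hq1, hq2⟩ := exists_between (show max 0 (p - η) < p by
      rw [max_lt_iff]; constructor <;> linarith)
    rw [max_lt_iff] at hq1
    obtain ⟨δ, hδ, hdd⟩ := hu y₀ q hq1.1
      (hopen (by rw [Real.dist_eq, abs_lt]; constructor <;> linarith))
    have e1 : ∀ᶠ y in 𝓝[<] y₀, q < slope φ y₀ y :=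
      (hslope.mono_left (nhdsWithin_mono _ (fun y (hy : y < y₀) => hy.ne))).eventually
        (lt_mem_nhds (by linarith))
    have e2 : ∀ᶠ y in 𝓝[<] y₀, v y - φ y ≤ v y₀ - φ y₀ := nhdsWithin_le_nhds hmax
    have e3 : ∀ᶠ y in 𝓝[<] y₀, y₀ - δ < y := nhdsWithin_le_nhds (lt_mem_nhds (by linarith))
    obtain ⟨y, h1, h2, h3, h4⟩ := (e1.and (e2.and (e3.and self_mem_nhdsWithin))).exists
    have h4 : y < y₀ := h4
    have h5 := hdd y y₀ h3 h4.le (by linarith)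
    rw [slope_def_field, lt_div_iff_of_neg (by linarith)] at h1
    linarith

/-- Glueing two increment bounds. -/
lemma glue_incr {v₁ v₂ : ℝ → ℝ} {p c d z σ : ℝ}
    (h1 : ∀ a b : ℝ, c < a → a ≤ b → b < d → σ * (v₁ b - v₁ a) ≤ p * (b - a))
    (h2 : ∀ a b : ℝ, c < a → a ≤ b → b < d → σ * (v₂ b - v₂ a) ≤ p * (b - a))
    (a b : ℝ) (ha : c < a) (hab : a ≤ b) (hb : b < d) :
    σ * ((v₁ (min b z) + v₂ (max b z)) - (v₁ (min a z) + v₂ (max a z))) ≤ p * (b - a) := by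
  rcases le_total b z with hbz | hbz
  · rw [min_eq_left hbz, max_eq_right hbz, min_eq_left (hab.trans hbz),
      max_eq_right (hab.trans hbz)]
    have := h1 a b ha hab hb
    linarith
  · rcases le_total a z with haz | haz
    · rw [min_eq_right hbz, max_eq_left hbz, min_eq_left haz, max_eq_right haz]
      have i1 := h1 a z ha haz (by linarith)
      have i2 := h2 z b (by linarith) hbz hb
      linarith
    · rw [min_eq_right hbz, max_eq_left hbz, min_eq_right haz, max_eq_left haz]
      have := h2 a b ha hab hb
      linarith

lemma glue_visc {G : ℝ → ℝ → ℝ} (hG : GoodHam G) {μ : ℝ} {v₁ v₂ : ℝ → ℝ}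
    (l1 : IsLip v₁) (l2 : IsLip v₂) (h1 : IsViscSubsol G μ univ v₁)
    (h2 : IsViscSubsol G μ univ v₂) (z : ℝ) :
    IsLip (fun y => v₁ (min y z) + v₂ (max y z)) ∧
      IsViscSubsol G μ univ (fun y => v₁ (min y z) + v₂ (max y z)) := by
  obtain ⟨K₁, hK₁⟩ := l1
  obtain ⟨K₂, hK₂⟩ := l2
  have c1 := hK₁.continuous
  have c2 := hK₂.continuous
  refine ⟨⟨K₁ * 1 + K₂ * 1, ?_⟩, ?_⟩
  · exact (hK₁.comp (LipschitzWith.id.min_const z)).add (hK₂.comp (LipschitzWith.id.max_const z))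
  · refine visc_of_slopes hG (visc_zero hG c1 h1) ?_ ?_
    · intro y₀ p hp hlt
      obtain ⟨δ₁, hδ₁, i1⟩ := visc_up hG c1 h1 y₀ p hp hlt
      obtain ⟨δ₂, hδ₂, i2⟩ := visc_up hG c2 h2 y₀ p hp hlt
      refine ⟨min δ₁ δ₂, lt_min hδ₁ hδ₂, fun a b ha hab hb => ?_⟩
      have m1 := min_le_left δ₁ δ₂
      have m2 := min_le_right δ₁ δ₂
      have := glue_incr (v₁ := v₁) (v₂ := v₂) (p := p) (c := y₀ - min δ₁ δ₂)
        (d := y₀ + min δ₁ δ₂) (z := z) (σ := 1)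
        (fun a b ha hab hb => by
          have := i1 a b (by linarith) hab (by linarith)
          linarith)
        (fun a b ha hab hb => by
          have := i2 a b (by linarith) hab (by linarith)
          linarith) a b ha hab hb
      linarith
    · intro y₀ p hp hlt
      obtain ⟨δ₁, hδ₁, i1⟩ := visc_down hG c1 h1 y₀ p hp hlt
      obtain ⟨δ₂, hδ₂, i2⟩ := visc_down hG c2 h2 y₀ p hp hlt
      refine ⟨min δ₁ δ₂, lt_min hδ₁ hδ₂, fun a b ha hab hb => ?_⟩
      have m1 := min_le_left δ₁ δ₂
      have m2 := min_le_right δ₁ δ₂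
      have := glue_incr (v₁ := v₁) (v₂ := v₂) (p := p) (c := y₀ - min δ₁ δ₂)
        (d := y₀ + min δ₁ δ₂) (z := z) (σ := -1)
        (fun a b ha hab hb => by
          have := i1 a b (by linarith) hab (by linarith)
          linarith)
        (fun a b ha hab hb => by
          have := i2 a b (by linarith) hab (by linarith)
          linarith) a b ha hab hb
      linarith

/-- Hausdorff distance between the reachable (sublevel) sets of
the metric solution. -/
theorem sublevel_sets_hausdorff_dist [MeasurableSpace Ω] (H : ℝ → ℝ → Ω → ℝ)
    (hH : HamHyp H) (ω : Ω) (μ : ℝ) (hμ : fluxLimiter H ω < μ) (x : ℝ)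
    (l L : ℝ) (hl : 0 < l)
    (hsand : ∀ x' y : ℝ, l * |y - x'| ≤ metricSol H μ ω y x' ∧
      metricSol H μ ω y x' ≤ L * |y - x'|)
    (t s : ℝ) (ht : 0 ≤ t) (hts : t ≤ s) :
    Metric.hausdorffDist {y : ℝ | metricSol H μ ω y x ≤ t}
      {y : ℝ | metricSol H μ ω y x ≤ s} ≤ (s - t) / l := by
  have hG := goodHam_of_hamHyp H hH ω
  set S : ℝ → ℝ → Set ℝ := fun y x => {r : ℝ | ∃ v : ℝ → ℝ, IsLip v ∧
    IsViscSubsol (fun p y => H p y ω) μ Set.univ v ∧ r = v y - v x} with hS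
  have hm : ∀ y x, metricSol H μ ω y x = sSup (S y x) := fun _ _ => rfl
  have hpos : ∀ y x, y ≠ x → 0 < sSup (S y x) := fun y x hyx =>
    (mul_pos hl (abs_pos.2 (sub_ne_zero.2 hyx))).trans_le (hsand x y).1
  have hbdd : ∀ y x, BddAbove (S y x) := by
    intro y x
    rcases eq_or_ne y x with rfl | hyx
    · refine ⟨0, ?_⟩
      rintro r ⟨v, _, _, rfl⟩
      simp
    · by_contra hn
      exact (hpos y x hyx).ne' (Real.sSup_of_not_bddAbove hn)
  obtain ⟨v₀, hv₀, hv₀'⟩ : ∃ v : ℝ → ℝ, IsLip v ∧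
      IsViscSubsol (fun p y => H p y ω) μ Set.univ v := by
    have hne : (S 1 0).Nonempty := by
      rw [nonempty_iff_ne_empty]
      intro he
      have := hpos 1 0 one_ne_zero
      rw [he, Real.sSup_empty] at this
      exact lt_irrefl _ this
    obtain ⟨r, v, h1, h2, _⟩ := hne
    exact ⟨v, h1, h2⟩
  have hne : ∀ y x, (S y x).Nonempty := fun y x => ⟨_, v₀, hv₀, hv₀', rfl⟩
  have hself : metricSol H μ ω x x = 0 := by
    have := hsand x x
    simp only [sub_self, abs_zero, mul_zero] at this
    exact le_antisymm this.2 this.1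
  have htri : ∀ y z, metricSol H μ ω y x ≤ metricSol H μ ω z x + metricSol H μ ω y z := by
    intro y z
    simp only [hm]
    refine csSup_le (hne y x) ?_
    rintro r ⟨v, h1, h2, rfl⟩
    have i1 := le_csSup (hbdd z x) ⟨v, h1, h2, rfl⟩
    have i2 := le_csSup (hbdd y z) ⟨v, h1, h2, rfl⟩
    linarith
  have hsuper : ∀ y z, z ∈ uIcc x y →
      metricSol H μ ω z x + metricSol H μ ω y z ≤ metricSol H μ ω y x := by
    intro y z hz
    simp only [hm]
    have key : ∀ r₁ ∈ S z x, ∀ r₂ ∈ S y z, r₁ + r₂ ≤ sSup (S y x) := by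
      rintro r₁ ⟨v₁, l1, h1, rfl⟩ r₂ ⟨v₂, l2, h2, rfl⟩
      rcases mem_uIcc.1 hz with ⟨hxz, hzy⟩ | ⟨hyz, hzx⟩
      · obtain ⟨g1, g2⟩ := glue_visc hG l1 l2 h1 h2 z
        have := le_csSup (hbdd y x) ⟨_, g1, g2, rfl⟩
        simp only [min_eq_right hzy, max_eq_left hzy, min_eq_left hxz, max_eq_right hxz] at this
        linarith
      · obtain ⟨g1, g2⟩ := glue_visc hG l2 l1 h2 h1 z
        have := le_csSup (hbdd y x) ⟨_, g1, g2, rfl⟩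
        simp only [min_eq_left hyz, max_eq_right hyz, min_eq_right hzx, max_eq_left hzx] at this
        linarith
    have k1 : sSup (S z x) ≤ sSup (S y x) - sSup (S y z) := by
      refine csSup_le (hne z x) fun r₁ hr₁ => ?_
      have : sSup (S y z) ≤ sSup (S y x) - r₁ :=
        csSup_le (hne y z) fun r₂ hr₂ => by linarith [key r₁ hr₁ r₂ hr₂]
      linarith
    linarith
  have hcont : Continuous fun y => metricSol H μ ω y x := by
    have : LipschitzWith (Real.toNNReal L) fun y => metricSol H μ ω y x := by
      refine LipschitzWith.of_le_add_mul _ fun y z => ?_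
      have h1 := htri y z
      have h2 := (hsand z y).2
      have h3 : L * |y - z| ≤ (Real.toNNReal L : ℝ) * dist y z := by
        rw [Real.dist_eq]
        exact mul_le_mul_of_nonneg_right (Real.le_coe_toNNReal L) (abs_nonneg _)
      linarith
    exact this.continuous
  have hr : 0 ≤ (s - t) / l := div_nonneg (by linarith) hl.le
  refine Metric.hausdorffDist_le_of_mem_dist hr ?_ ?_
  · intro y hy
    have hy : metricSol H μ ω y x ≤ t := hy
    exact ⟨y, hy.trans hts, by simpa using hr⟩
  · intro y hy
    have hy : metricSol H μ ω y x ≤ s := hy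
    rcases le_or_gt (metricSol H μ ω y x) t with hyt | hyt
    · exact ⟨y, hyt, by simpa using hr⟩
    · obtain ⟨z, hz, hzt⟩ := intermediate_value_uIcc (a := x) (b := y) hcont.continuousOn
        (mem_uIcc.2 (Or.inl ⟨by simpa [hself] using ht, hyt.le⟩))
      have hzt : metricSol H μ ω z x = t := hzt
      refine ⟨z, hzt.le, ?_⟩
      rw [Real.dist_eq, le_div_iff₀ hl]
      have h1 := hsuper y z hz
      have h2 := (hsand z y).1
      linarith
end
end

section
/- Under the assumptions of the homogenization of the metric problem (so that m_μ(ty,tx,ω)/t → m̄_μ(y,x) almost surely for μ > Ā), if x ≥ 0 and y > 0 (resp. x ≤ 0 and y < 0) then there exists m̄_μ^R : ℝ → [0,+∞) (resp. m̄_μ^L) such that m̄_μ(y,x) = m̄_μ^R(y−x) (resp. m̄_μ^L(y−x)). Moreover, with p̄_μ^{α,±} the values with ±p̄_μ^{α,±} ≥ 0 and H̄_α(p̄_μ^{α,±}) = H̄_α^±(p̄_μ^{α,±}) = μ, one has m̄_μ^R(y−x) = p̄_μ^{R,+}(y−x) for y > x and p̄_μ^{R,−}(y−x) for y < x, and similarly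 m̄_μ^L(y−x) = p̄_μ^{L,+}(y−x) for y > x and p̄_μ^{L,−}(y−x) for y < x. -/
open MeasureTheory ProbabilityTheory Set Filter Topology

noncomputable section

variable {Ω : Type*}

/-! ### Deterministic part -/

/-- Deterministic Hamiltonians for which everything works. -/
structure DH (G : ℝ → ℝ → ℝ) : Prop where
  cont : Continuous fun q : ℝ × ℝ => G q.1 q.2
  conv : ∀ y, ConvexOn ℝ Set.univ fun p => G p y
  mn : ∀ p y, G 0 y ≤ G p y
  lower : ∃ c, ∀ y, c ≤ G 0 y
  upper : ∀ p, ∃ C, ∀ y, G p y ≤ C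

/-- The largest nonnegative slope at level `μ`. -/
def bsl (G : ℝ → ℝ → ℝ) (μ y : ℝ) : ℝ := sSup {p | 0 ≤ p ∧ (p = 0 ∨ G p y ≤ μ)}

lemma DH.scale {G : ℝ → ℝ → ℝ} (h : DH G) {θ p y : ℝ} (h0 : 0 ≤ θ) (h1 : θ ≤ 1) :
    G (θ * p) y ≤ θ * G p y + (1 - θ) * G 0 y := by
  have := (h.conv y).2 (mem_univ p) (mem_univ 0) h0 (by linarith : 0 ≤ 1 - θ) (by ring)
  simpa using this

lemma DH.mono {G : ℝ → ℝ → ℝ} (h : DH G) {p q y : ℝ} (h0 : 0 ≤ p) (h1 : p ≤ q) :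
    G p y ≤ G q y := by
  rcases eq_or_lt_of_le (h0.trans h1) with hq | hq
  · have : p = q := by linarith
    rw [this]
  · have hs := h.scale (θ := p / q) (p := q) (y := y) (by positivity) (by rw [div_le_one hq]; exact h1)
    have e : p / q * q = p := by field_simp
    rw [e] at hs
    have h1' : p / q ≤ 1 := by rw [div_le_one hq]; exact h1
    have := h.mn q y
    nlinarith

lemma DH.cont_p {G : ℝ → ℝ → ℝ} (h : DH G) (y : ℝ) : Continuous fun p => G p y :=
  h.cont.comp (by fun_prop : Continuous fun p : ℝ => ((p, y) : ℝ × ℝ))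

lemma DH.cont_y {G : ℝ → ℝ → ℝ} (h : DH G) (p : ℝ) : Continuous fun y => G p y :=
  h.cont.comp (by fun_prop : Continuous fun y : ℝ => ((p, y) : ℝ × ℝ))

section
variable {G : ℝ → ℝ → ℝ} {μ R : ℝ}

lemma bsl_mem_le (h : DH G) (hR : ∀ p y, R ≤ |p| → μ + 1 ≤ G p y) {y p : ℝ}
    (hp : p ∈ {p | 0 ≤ p ∧ (p = 0 ∨ G p y ≤ μ)}) : p ≤ |R| := by
  obtain ⟨h0, h1⟩ := hp
  by_contra hc
  push Not at hc
  have := abs_nonneg R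
  rcases h1 with h1 | h1
  · linarith
  · have := hR p y (by rw [abs_of_nonneg h0]; linarith [le_abs_self R])
    linarith

lemma bsl_bdd (h : DH G) (hR : ∀ p y, R ≤ |p| → μ + 1 ≤ G p y) (y : ℝ) :
    BddAbove {p | 0 ≤ p ∧ (p = 0 ∨ G p y ≤ μ)} :=
  ⟨|R|, fun _ hp => bsl_mem_le h hR hp⟩

lemma bsl_nonneg (h : DH G) (hR : ∀ p y, R ≤ |p| → μ + 1 ≤ G p y) (y : ℝ) :
    0 ≤ bsl G μ y := le_csSup (bsl_bdd h hR y) ⟨le_rfl, Or.inl rfl⟩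

lemma bsl_le (h : DH G) (hR : ∀ p y, R ≤ |p| → μ + 1 ≤ G p y) (y : ℝ) :
    bsl G μ y ≤ |R| :=
  csSup_le ⟨0, le_rfl, Or.inl rfl⟩ fun _ hp => bsl_mem_le h hR hp

lemma le_bsl_iff (h : DH G) (hR : ∀ p y, R ≤ |p| → μ + 1 ≤ G p y) {p y : ℝ} (hp : 0 < p) :
    p ≤ bsl G μ y ↔ G p y ≤ μ := by
  constructor
  · intro hle
    by_contra hc
    push Not at hc
    have hev : ∀ᶠ q in 𝓝 p, μ < G q y ∧ 0 < q :=
      ((h.cont_p y).continuousAt.eventually (lt_mem_nhds hc)).and (lt_mem_nhds hp)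
    obtain ⟨q, hq, hqp⟩ := (hev.filter_mono nhdsWithin_le_nhds |>.and
      (self_mem_nhdsWithin : Iio p ∈ 𝓝[<] p)).exists
    have : bsl G μ y ≤ q := by
      refine csSup_le ⟨0, le_rfl, Or.inl rfl⟩ ?_
      rintro r ⟨hr0, hr | hr⟩
      · linarith
      · by_contra hrq
        push Not at hrq
        have := h.mono hq.2.le hrq.le (y := y)
        linarith
    have : q < p := hqp
    linarith
  · intro hle
    exact le_csSup (bsl_bdd h hR y) ⟨hp.le, Or.inr hle⟩

lemma bsl_level (h : DH G) (hR : ∀ p y, R ≤ |p| → μ + 1 ≤ G p y) {y : ℝ} (h0 : G 0 y ≤ μ) :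
    G (bsl G μ y) y ≤ μ := by
  rcases eq_or_lt_of_le (bsl_nonneg h hR y) with hb | hb
  · rw [← hb]; exact h0
  · exact (le_bsl_iff h hR hb).1 le_rfl

lemma le_bsl (h : DH G) (hR : ∀ p y, R ≤ |p| → μ + 1 ≤ G p y) {p y : ℝ} (hp : G p y ≤ μ) :
    p ≤ bsl G μ y := by
  rcases le_or_gt p 0 with h0 | h0
  · exact h0.trans (bsl_nonneg h hR y)
  · exact (le_bsl_iff h hR h0).2 hp

lemma bsl_cont (h : DH G) (hR : ∀ p y, R ≤ |p| → μ + 1 ≤ G p y) {m : ℝ} (hm : m < μ)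
    (h0 : ∀ y, G 0 y ≤ m) : Continuous (bsl G μ) := by
  rw [continuous_iff_continuousAt]
  intro y
  rw [ContinuousAt, tendsto_order]
  constructor
  · intro a ha
    rcases lt_or_ge a 0 with ha0 | ha0
    · exact Eventually.of_forall fun z => ha0.trans_le (bsl_nonneg h hR z)
    · obtain ⟨c, hac, hcb⟩ := exists_between ha
      have hb : 0 < bsl G μ y := by linarith
      have hθ : c / bsl G μ y < 1 := by rw [div_lt_one hb]; exact hcb
      have hs := h.scale (θ := c / bsl G μ y) (p := bsl G μ y) (y := y)
        (div_nonneg (by linarith) hb.le) hθ.le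
      have e : c / bsl G μ y * bsl G μ y = c := by field_simp
      rw [e] at hs
      have hθ0 : 0 ≤ c / bsl G μ y := div_nonneg (by linarith) hb.le
      have hl := bsl_level h hR (h0 y |>.trans hm.le)
      have hlt : G c y < μ := by
        have := h0 y
        nlinarith
      filter_upwards [(h.cont_y c).continuousAt.eventually (gt_mem_nhds hlt)] with z hz
      exact hac.trans_le (le_bsl h hR hz.le)
  · intro a ha
    have ha0 : 0 < a := (bsl_nonneg h hR y).trans_lt ha
    have hlt : μ < G a y := by
      by_contra hc
      push Not at hc
      linarith [le_bsl h hR hc]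
    filter_upwards [(h.cont_y a).continuousAt.eventually (lt_mem_nhds hlt)] with z hz
    by_contra hc
    push Not at hc
    linarith [(le_bsl_iff h hR ha0).1 hc]

end

/-- Existence of touching points. -/
lemma subsol_zero_le {G : ℝ → ℝ → ℝ} (h : DH G) {ν : ℝ} {v : ℝ → ℝ} (hv : IsLip v)
    (hs : IsViscSubsol G ν Set.univ v) (y : ℝ) : G 0 y ≤ ν := by
  obtain ⟨K, hK⟩ := hv
  by_contra hc
  push Not at hc
  obtain ⟨δ, hδ, hb⟩ := Metric.eventually_nhds_iff.1
    ((h.cont_y 0).continuousAt.eventually (lt_mem_nhds hc))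
  set d := δ / 2 with hd
  have hd0 : 0 < d := by positivity
  set M : ℝ := (K + 1) / d with hM
  have hMd : M * d = K + 1 := by rw [hM]; field_simp
  have hfc : Continuous fun z => v z - M * (z - y) ^ 2 := by
    have := hK.continuous
    fun_prop
  obtain ⟨z, hz, hzmax⟩ := (isCompact_Icc (a := y - d) (b := y + d)).exists_isMaxOn
    ⟨y, by constructor <;> linarith⟩ hfc.continuousOn
  have hy := hzmax (show y ∈ Icc (y - d) (y + d) by constructor <;> linarith)
  simp only [sub_self, mem_ofPred_eq] at hy
  have hlip : v z - v y ≤ K * |z - y| := by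
    have := hK.dist_le_mul z y
    rw [Real.dist_eq, Real.dist_eq] at this
    exact (le_abs_self _).trans this
  have hzd : |z - y| < d := by
    by_contra hcc
    push Not at hcc
    have h1 : M * (z - y) ^ 2 ≤ K * |z - y| := by nlinarith
    rw [← sq_abs] at h1
    have hM0 : 0 < M := by positivity
    have h2 : (K + 1) * |z - y| ≤ M * |z - y| ^ 2 := by
      rw [← hMd]
      have := mul_le_mul_of_nonneg_left hcc (mul_nonneg hM0.le (abs_nonneg (z - y)))
      nlinarith
    nlinarith
  rw [abs_lt] at hzd
  have hloc : IsLocalMaxOn (fun s => v s - M * (s - y) ^ 2) univ z := by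
    rw [isLocalMaxOn_univ_iff]
    exact hzmax.isLocalMax (Icc_mem_nhds (by linarith) (by linarith))
  have h3 := hs (fun s => M * (s - y) ^ 2) (by fun_prop) z (mem_univ _) hloc
  have h4 := h.mn (deriv (fun s => M * (s - y) ^ 2) z) z
  have h5 := hb (y := z) (by rw [Real.dist_eq, abs_lt]; constructor <;> linarith)
  linarith

/-- One-sided penalization. -/
lemma contDiff_pen (y : ℝ) (K : ℝ) : ContDiff ℝ 1 (fun s => K * (max (s - y) 0) ^ 2) ∧
    ∀ s, HasDerivAt (fun s => K * (max (s - y) 0) ^ 2) (2 * K * max (s - y) 0) s := by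
  have hd : ∀ s, HasDerivAt (fun s => K * (max (s - y) 0) ^ 2) (2 * K * max (s - y) 0) s := by
    intro s
    have base : HasDerivAt (fun s : ℝ => (max (s - y) 0) ^ 2) (2 * max (s - y) 0) s := by
      rcases lt_trichotomy s y with hs | hs | hs
      · rw [max_eq_right (by linarith)]
        have : (fun s : ℝ => (max (s - y) 0) ^ 2) =ᶠ[𝓝 s] fun _ => 0 := by
          filter_upwards [gt_mem_nhds hs] with z hz
          rw [max_eq_right (by linarith)]; ring
        simpa using (hasDerivAt_const s (0:ℝ)).congr_of_eventuallyEq this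
      · subst hs
        simp only [sub_self, max_self, mul_zero]
        rw [hasDerivAt_iff_isLittleO, Asymptotics.isLittleO_iff]
        intro c hc
        filter_upwards [Metric.ball_mem_nhds s hc] with z hz
        rw [Metric.mem_ball, Real.dist_eq] at hz
        simp only [sub_self, max_self, smul_zero, sub_zero, Real.norm_eq_abs]
        rw [zero_pow two_ne_zero, sub_zero, abs_of_nonneg (sq_nonneg _)]
        have h1 : max (z - s) 0 ≤ |z - s| := max_le (le_abs_self _) (abs_nonneg _)
        have h2 : 0 ≤ max (z - s) 0 := le_max_right _ _
        nlinarith [abs_nonneg (z - s)]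
      · rw [max_eq_left (by linarith)]
        have : (fun s : ℝ => (max (s - y) 0) ^ 2) =ᶠ[𝓝 s] fun s => (s - y) ^ 2 := by
          filter_upwards [lt_mem_nhds hs] with z hz
          rw [max_eq_left (by linarith)]
        have h2 : HasDerivAt (fun s => (s - y) ^ 2) (2 * (s - y)) s := by
          have h3 := ((hasDerivAt_id s).sub_const y).pow 2
          have e : (fun s : ℝ => (s - y) ^ 2) = (fun x => id x - y) ^ 2 := by
            funext z; simp
          rw [e]
          simpa using h3
        exact h2.congr_of_eventuallyEq this
    have := base.const_mul K
    rw [show 2 * K * max (s - y) 0 = K * (2 * max (s - y) 0) by ring]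
    exact this
  refine ⟨?_, hd⟩
  rw [contDiff_one_iff_deriv]
  refine ⟨fun s => (hd s).differentiableAt, ?_⟩
  have : deriv (fun s => K * (max (s - y) 0) ^ 2) = fun s => 2 * K * max (s - y) 0 :=
    funext fun s => (hd s).deriv
  rw [this]
  fun_prop

lemma contDiff_prim {b : ℝ → ℝ} (hb : Continuous b) (a : ℝ) :
    ContDiff ℝ 1 (fun u => ∫ s in a..u, b s) ∧
    ∀ u, HasDerivAt (fun u => ∫ s in a..u, b s) (b u) u := by
  have hd : ∀ u, HasDerivAt (fun u => ∫ s in a..u, b s) (b u) u := fun u =>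
    intervalIntegral.integral_hasDerivAt_right (hb.intervalIntegrable _ _)
      (hb.stronglyMeasurableAtFilter _ _) hb.continuousAt
  refine ⟨?_, hd⟩
  rw [contDiff_one_iff_deriv]
  refine ⟨fun s => (hd s).differentiableAt, ?_⟩
  rw [funext fun s => (hd s).deriv]
  exact hb

lemma subsol_increment {G : ℝ → ℝ → ℝ} {μ : ℝ} {b : ℝ → ℝ} (hb : Continuous b)
    (hGb : ∀ p y, G p y ≤ μ → p ≤ b y) {v : ℝ → ℝ} (hv : Continuous v)
    (hs : IsViscSubsol G μ Set.univ v) {x y : ℝ} (hxy : x ≤ y) :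
    v y - v x ≤ ∫ s in x..y, b s := by
  rcases eq_or_lt_of_le hxy with rfl | hxy
  · simp
  by_contra hc
  push Not at hc
  set B : ℝ → ℝ := fun u => ∫ s in x..u, b s with hB
  obtain ⟨hBc, hBd⟩ := contDiff_prim hb x
  set δ := (v y - v x - ∫ s in x..y, b s) / (2 * (y - x)) with hδ
  have hδ0 : 0 < δ := div_pos (by linarith) (by linarith)
  have hδe : δ * (2 * (y - x)) = v y - v x - ∫ s in x..y, b s := by
    rw [hδ]; field_simp [(by linarith : y - x ≠ 0)]
  set g : ℝ → ℝ := fun s => v s - B s - δ * (s - x) with hg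
  set K : ℝ := |g (y + 1) - g y| + 1 with hK
  have hK0 : 0 < K := by positivity
  obtain ⟨hPc, hPd⟩ := contDiff_pen y K
  set φ : ℝ → ℝ := fun s => B s + δ * (s - x) + K * (max (s - y) 0) ^ 2 with hφ
  have hφc : ContDiff ℝ 1 φ := by
    refine ContDiff.add (ContDiff.add hBc (by fun_prop)) hPc
  have hφd : ∀ s, HasDerivAt φ (b s + δ + 2 * K * max (s - y) 0) s := by
    intro s
    refine HasDerivAt.add (HasDerivAt.add (hBd s) ?_) (hPd s)
    simpa using ((hasDerivAt_id s).sub_const x).const_mul δ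
  obtain ⟨z, hz, hzmax⟩ := (isCompact_Icc (a := x) (b := y + 1)).exists_isMaxOn
    ⟨y, by constructor <;> linarith⟩ (hv.sub hφc.continuous).continuousOn
  have hBx : B x = 0 := by simp [hB]
  have hzy := hzmax (show y ∈ Icc x (y + 1) by constructor <;> linarith)
  simp only [Pi.sub_apply, mem_ofPred_eq] at hzy
  have e1 : φ y = B y + δ * (y - x) := by simp [hφ]
  have hzx : z ≠ x := by
    rintro rfl
    have e2 : φ z = 0 := by simp [hφ, hBx, max_eq_right (by linarith : z - y ≤ 0)]
    rw [e1, e2] at hzy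
    have : B y = ∫ s in z..y, b s := rfl
    nlinarith
  have hzy1 : z ≠ y + 1 := by
    rintro rfl
    have e2 : v (y + 1) - φ (y + 1) = g (y + 1) - K := by
      simp only [hφ, hg]; simp; ring
    rw [e2, e1] at hzy
    have : v y - (B y + δ * (y - x)) = g y := by simp only [hg]; ring
    rw [this] at hzy
    have := le_abs_self (g (y + 1) - g y)
    linarith
  have h1 : x < z := lt_of_le_of_ne hz.1 (Ne.symm hzx)
  have h2 : z < y + 1 := lt_of_le_of_ne hz.2 hzy1
  have hloc : IsLocalMaxOn (fun s => v s - φ s) univ z := by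
    rw [isLocalMaxOn_univ_iff]
    exact hzmax.isLocalMax (Icc_mem_nhds h1 h2)
  have h3 := hGb _ _ (hs φ hφc z (mem_univ _) hloc)
  rw [(hφd z).deriv] at h3
  have : 0 ≤ 2 * K * max (z - y) 0 := by
    have := le_max_right (z - y) 0
    positivity
  linarith

lemma prim_subsol {G : ℝ → ℝ → ℝ} {μ : ℝ} {b : ℝ → ℝ} (hb : Continuous b)
    (hGb : ∀ y, G (b y) y ≤ μ) (a : ℝ) :
    IsViscSubsol G μ Set.univ (fun u => ∫ s in a..u, b s) := by
  intro φ hφ y _ hmax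
  rw [isLocalMaxOn_univ_iff] at hmax
  have h1 := ((contDiff_prim hb a).2 y).sub
    ((hφ.differentiable one_ne_zero) y).hasDerivAt
  have h2 := hmax.hasDerivAt_eq_zero h1
  have : deriv φ y = b y := by linarith
  rw [this]
  exact hGb y

lemma prim_lip {b : ℝ → ℝ} (hb : Continuous b) {R : ℝ} (hR : ∀ y, |b y| ≤ R) (a : ℝ) :
    IsLip (fun u => ∫ s in a..u, b s) := by
  refine ⟨R.toNNReal, lipschitzWith_of_nnnorm_deriv_le
    (fun u => ((contDiff_prim hb a).2 u).differentiableAt) fun u => ?_⟩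
  rw [((contDiff_prim hb a).2 u).deriv, ← NNReal.coe_le_coe, coe_nnnorm, Real.norm_eq_abs]
  exact (hR u).trans (Real.le_coe_toNNReal R)

lemma subsol_scale {G : ℝ → ℝ → ℝ} (h : DH G) {ν m θ : ℝ} (hθ : 0 < θ) (hθ1 : θ ≤ 1)
    (h0 : ∀ y, G 0 y ≤ m) {u : ℝ → ℝ} (hs : IsViscSubsol G ν Set.univ u) :
    IsViscSubsol G (θ * ν + (1 - θ) * m) Set.univ (fun y => θ * u y) := by
  intro φ hφ y _ hmax
  have hφ' : ContDiff ℝ 1 (fun s => θ⁻¹ * φ s) := contDiff_const.mul hφ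
  have h1 := hs _ hφ' y (mem_univ _) (by
    rw [isLocalMaxOn_univ_iff] at hmax ⊢
    filter_upwards [hmax] with z hz
    have := mul_le_mul_of_nonneg_left hz (inv_nonneg.2 hθ.le)
    have e : ∀ w, θ⁻¹ * (θ * u w - φ w) = u w - θ⁻¹ * φ w := fun w => by field_simp
    rw [e, e] at this
    exact this)
  have h2 : deriv (fun s => θ⁻¹ * φ s) y = θ⁻¹ * deriv φ y := by simp
  rw [h2] at h1
  have h3 := h.scale (θ := θ) (p := θ⁻¹ * deriv φ y) (y := y) hθ.le hθ1
  rw [mul_inv_cancel_left₀ hθ.ne'] at h3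
  have := h0 y
  nlinarith

/-- Explicit formula for the metric. -/
lemma metricSol_eq {H : ℝ → ℝ → Ω → ℝ} {ω : Ω} (h : DH fun p y => H p y ω) {μ m R : ℝ}
    (hm : m < μ) (h0 : ∀ y, H 0 y ω ≤ m) (hR : ∀ p y, R ≤ |p| → μ + 1 ≤ H p y ω)
    {x y : ℝ} (hxy : x ≤ y) :
    metricSol H μ ω y x = ∫ s in x..y, bsl (fun p y => H p y ω) μ s := by
  have hc := bsl_cont h hR hm h0
  refine IsGreatest.csSup_eq ⟨?_, ?_⟩
  · refine ⟨fun u => ∫ s in x..u, bsl (fun p y => H p y ω) μ s, ?_, ?_, by simp⟩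
    · refine prim_lip hc (R := |R|) (fun y => ?_) x
      rw [abs_of_nonneg (bsl_nonneg h hR y)]
      exact bsl_le h hR y
    · exact prim_subsol hc (fun y => bsl_level h hR ((h0 y).trans hm.le)) x
  · rintro r ⟨v, ⟨K, hK⟩, hs, rfl⟩
    exact subsol_increment hc (fun p y hp => le_bsl h hR hp) hK.continuous hs hxy

/-- The slope of the effective Hamiltonian is the average of `bsl`. -/
lemma effective_slope {H : ℝ → ℝ → Ω → ℝ} {ω : Ω} (h : DH fun p y => H p y ω) {μ m R p β : ℝ}
    (hm : m < μ) (h0 : ∀ y, H 0 y ω ≤ m) (hR : ∀ p y, R ≤ |p| → μ + 1 ≤ H p y ω)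
    (hp : 0 ≤ p) (hμ : effectiveHam H ω p = μ)
    (ht : Tendsto (fun T => (∫ s in (0:ℝ)..T, bsl (fun p y => H p y ω) μ s) / T) atTop (𝓝 β))
    (hb : Tendsto (fun T => (∫ s in (0:ℝ)..T, bsl (fun p y => H p y ω) μ s) / T) atBot (𝓝 β)) :
    p = β := by
  set b := bsl (fun p y => H p y ω) μ with hbdef
  have hc : Continuous b := bsl_cont h hR hm h0
  set S := {μ : ℝ | ∃ v : ℝ → ℝ, IsLip v ∧
    Tendsto (fun y => v y / |y|) (cocompact ℝ) (𝓝 0) ∧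
    IsViscSubsol (fun q y => H q y ω) μ Set.univ fun y => p * y + v y} with hS
  have hμ' : sInf S = μ := hμ
  have hlipadd : ∀ v, IsLip v → ∀ c : ℝ, IsLip fun y => c * y + v y := by
    rintro v ⟨K, hK⟩ c
    refine ⟨‖c‖₊ + K, ?_⟩
    refine LipschitzWith.add ?_ hK
    refine LipschitzWith.of_dist_le_mul fun x y => ?_
    rw [Real.dist_eq, Real.dist_eq, ← mul_sub, abs_mul]
    simp
  have hne : S.Nonempty := by
    obtain ⟨C, hC⟩ := h.upper p
    refine ⟨C, fun _ => 0, ⟨0, LipschitzWith.const 0⟩, by simp, ?_⟩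
    intro φ hφ y _ hmax
    rw [isLocalMaxOn_univ_iff] at hmax
    have h1 : HasDerivAt (fun y => p * y + 0 - φ y) (p - deriv φ y) y := by
      refine HasDerivAt.sub ?_ ((hφ.differentiable one_ne_zero) y).hasDerivAt
      simpa using (hasDerivAt_id y).const_mul p
    have h2 := hmax.hasDerivAt_eq_zero h1
    have : deriv φ y = p := by linarith
    rw [this]; exact hC y
  have hbd : BddBelow S := by
    obtain ⟨c, hc⟩ := h.lower
    refine ⟨c, ?_⟩
    rintro ν ⟨v, hv, -, hs⟩
    exact (hc 0).trans (subsol_zero_le h (hlipadd v hv p) hs 0)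
  have key1 : ∀ ν, μ < ν → (μ - m) / (ν - m) * p ≤ β := by
    intro ν hν
    obtain ⟨ν', ⟨v, hv, hvt, hs⟩, hν'⟩ := exists_lt_of_csInf_lt hne (hμ'.symm ▸ hν)
    have hν'μ : μ ≤ ν' := hμ' ▸ csInf_le hbd ⟨v, hv, hvt, hs⟩
    set θ := (μ - m) / (ν' - m) with hθ
    have hθ0 : 0 < θ := div_pos (by linarith) (by linarith)
    have hθ1 : θ ≤ 1 := by rw [hθ, div_le_one (by linarith)]; linarith
    have hss := subsol_scale h hθ0 hθ1 h0 hs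
    have e : θ * ν' + (1 - θ) * m = μ := by
      have : θ * (ν' - m) = μ - m := by rw [hθ]; field_simp [(by linarith : ν' - m ≠ 0)]
      linarith
    rw [e] at hss
    obtain ⟨K, hK⟩ := hv
    have hvc := hK.continuous
    have hinc : ∀ T, 0 ≤ T → θ * (p * T + v T) - θ * (v 0) ≤ ∫ s in (0:ℝ)..T, b s := by
      intro T hT
      have := subsol_increment hc (fun p y hp => le_bsl h hR hp)
        (by fun_prop) hss hT
      simpa using this
    have hlim : Tendsto (fun T => θ * p + θ * (v T / |T|) - θ * v 0 * T⁻¹) atTop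
        (𝓝 (θ * p + θ * 0 - θ * v 0 * 0)) := by
      refine Tendsto.sub (Tendsto.add tendsto_const_nhds (Tendsto.const_mul θ (hvt.mono_left ?_)))
        (tendsto_inv_atTop_zero.const_mul _)
      rw [cocompact_eq_atBot_atTop]; exact le_sup_right
    have hle : θ * p ≤ β := by
      have := le_of_tendsto_of_tendsto hlim ht (by
        filter_upwards [eventually_gt_atTop 0] with T hT
        rw [le_div_iff₀ hT, abs_of_pos hT]
        have := hinc T hT.le
        have e : (θ * p + θ * (v T / T) - θ * v 0 * T⁻¹) * T = θ * (p * T + v T) - θ * (v 0) := by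
          field_simp
        rw [e]; exact this)
      simpa using this
    have hθθ : (μ - m) / (ν - m) ≤ θ := by
      rw [hθ]
      exact div_le_div_of_nonneg_left (by linarith) (by linarith) (by linarith)
    exact (mul_le_mul_of_nonneg_right hθθ hp).trans hle
  have hpβ : p ≤ β := by
    have hlim : Tendsto (fun ν => (μ - m) / (ν - m) * p) (𝓝[>] μ) (𝓝 ((μ - m) / (μ - m) * p)) := by
      refine Tendsto.mono_left ?_ nhdsWithin_le_nhds
      have : ContinuousAt (fun ν => (μ - m) / (ν - m) * p) μ := by
        have : μ - m ≠ 0 := by linarith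
        fun_prop (disch := assumption)
      exact this
    rw [div_self (by linarith : μ - m ≠ 0), one_mul] at hlim
    exact le_of_tendsto hlim (by
      filter_upwards [self_mem_nhdsWithin] with ν hν using key1 ν hν)
  by_contra hne'
  have hlt : p < β := lt_of_le_of_ne hpβ hne'
  have hβ : 0 < β := by linarith
  set θ := p / β with hθ
  have hθ0 : 0 ≤ θ := by positivity
  have hθ1 : θ < 1 := by rw [hθ, div_lt_one hβ]; exact hlt
  have hθβ : θ * β = p := by rw [hθ]; field_simp
  set B : ℝ → ℝ := fun u => ∫ s in (0:ℝ)..u, b s with hB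
  have hBlip : IsLip B := prim_lip hc (R := |R|) (fun y => by
    rw [abs_of_nonneg (bsl_nonneg h hR y)]; exact bsl_le h hR y) 0
  have hBs : IsViscSubsol (fun q y => H q y ω) μ Set.univ B :=
    prim_subsol hc (fun y => bsl_level h hR ((h0 y).trans hm.le)) 0
  have hmem : θ * μ + (1 - θ) * m ∈ S := by
    refine ⟨fun y => -p * y + θ * B y, ?_, ?_, ?_⟩
    · refine hlipadd _ ?_ _
      obtain ⟨K, hK⟩ := hBlip
      refine ⟨‖θ‖₊ * K, LipschitzWith.of_dist_le_mul fun x y => ?_⟩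
      have := hK.dist_le_mul x y
      rw [Real.dist_eq] at this ⊢
      rw [← mul_sub, abs_mul]
      push_cast
      rw [mul_assoc]
      exact mul_le_mul_of_nonneg_left this (abs_nonneg _)
    · rw [cocompact_eq_atBot_atTop]
      refine Tendsto.sup ?_ ?_
      · have : Tendsto (fun y => p - θ * (B y / y)) atBot (𝓝 (p - θ * β)) :=
          tendsto_const_nhds.sub (hb.const_mul θ)
        rw [hθβ, sub_self] at this
        refine this.congr' ?_
        filter_upwards [eventually_lt_atBot 0] with y hy
        rw [abs_of_neg hy]
        field_simp [hy.ne]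
        ring
      · have : Tendsto (fun y => -p + θ * (B y / y)) atTop (𝓝 (-p + θ * β)) :=
          tendsto_const_nhds.add (ht.const_mul θ)
        rw [hθβ, neg_add_cancel] at this
        refine this.congr' ?_
        filter_upwards [eventually_gt_atTop 0] with y hy
        rw [abs_of_pos hy]
        field_simp [hy.ne]
    · have e : (fun y => p * y + (-p * y + θ * B y)) = fun y => θ * B y := by
        funext y; ring
      rw [e]
      rcases eq_or_lt_of_le hθ0 with h00 | h00
      · rw [← h00]
        intro φ hφ y _ hmax
        rw [isLocalMaxOn_univ_iff] at hmax
        have h1 : HasDerivAt (fun y => 0 * B y - φ y) (0 - deriv φ y) y := by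
          simp only [zero_mul]
          exact (hasDerivAt_const y (0:ℝ)).sub ((hφ.differentiable one_ne_zero) y).hasDerivAt
        have h2 := hmax.hasDerivAt_eq_zero h1
        have : deriv φ y = 0 := by linarith
        rw [this]
        simpa using h0 y
      · exact subsol_scale h h00 hθ1.le h0 hBs
  have := csInf_le hbd hmem
  rw [hμ'] at this
  nlinarith

/-! ### Averages -/

lemma avg_of_blocks {F : ℝ → ℝ} {R β : ℝ} (hF : ∀ a b, IntervalIntegrable F volume a b)
    (hR : ∀ s, |F s| ≤ R)
    (he : Tendsto (fun n : ℕ => (∑ i ∈ Finset.range n, ∫ s in (2 * (i:ℝ))..(2 * (i:ℝ) + 1), F s) / n)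
      atTop (𝓝 β))
    (ho : Tendsto (fun n : ℕ => (∑ i ∈ Finset.range n,
      ∫ s in (2 * (i:ℝ) + 1)..(2 * (i:ℝ) + 2), F s) / n) atTop (𝓝 β)) :
    Tendsto (fun T => (∫ s in (0:ℝ)..T, F s) / T) atTop (𝓝 β) := by
  have hsum : ∀ n : ℕ, (∑ i ∈ Finset.range n, ∫ s in (2 * (i:ℝ))..(2 * (i:ℝ) + 1), F s) +
      (∑ i ∈ Finset.range n, ∫ s in (2 * (i:ℝ) + 1)..(2 * (i:ℝ) + 2), F s) =
      ∫ s in (0:ℝ)..(2 * (n:ℝ)), F s := by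
    intro n
    induction n with
    | zero => simp
    | succ n ih =>
      rw [Finset.sum_range_succ, Finset.sum_range_succ]
      have h1 := intervalIntegral.integral_add_adjacent_intervals
        (hF 0 (2 * (n:ℝ))) (hF (2 * (n:ℝ)) (2 * (n:ℝ) + 1))
      have h2 := intervalIntegral.integral_add_adjacent_intervals
        (hF 0 (2 * (n:ℝ) + 1)) (hF (2 * (n:ℝ) + 1) (2 * (n:ℝ) + 2))
      have e : 2 * ((n + 1 : ℕ) : ℝ) = 2 * (n:ℝ) + 2 := by push_cast; ring
      rw [e]
      linarith
  have hA : Tendsto (fun n : ℕ => (∫ s in (0:ℝ)..(2 * (n:ℝ)), F s) / n) atTop (𝓝 (β + β)) := by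
    refine (he.add ho).congr fun n => ?_
    rw [← add_div, hsum]
  have hhalf : Tendsto (fun T : ℝ => T / 2) atTop atTop := tendsto_id.atTop_div_const (by norm_num)
  have hfl : Tendsto (fun T : ℝ => ⌊T / 2⌋₊) atTop atTop := tendsto_nat_floor_atTop.comp hhalf
  have h1 := hA.comp hfl
  have h2 : Tendsto (fun T : ℝ => (⌊T / 2⌋₊ : ℝ) / (T / 2)) atTop (𝓝 1) :=
    (tendsto_nat_floor_div_atTop (R := ℝ)).comp hhalf
  have h3 := (h1.mul h2).div_const 2
  have hR0 : 0 ≤ R := (abs_nonneg _).trans (hR 0)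
  have h4 : Tendsto (fun T : ℝ => (∫ s in (2 * (⌊T / 2⌋₊ : ℝ))..T, F s) / T) atTop (𝓝 0) := by
    have hz : Tendsto (fun T : ℝ => (2 * R) * T⁻¹) atTop (𝓝 0) := by
      simpa using tendsto_inv_atTop_zero.const_mul (2 * R)
    refine squeeze_zero_norm' ?_ hz
    filter_upwards [eventually_gt_atTop 0] with T hT
    rw [norm_div, Real.norm_of_nonneg hT.le, div_eq_mul_inv]
    refine mul_le_mul_of_nonneg_right ?_ (by positivity)
    have hb := intervalIntegral.norm_integral_le_of_norm_le_const
      (a := 2 * (⌊T / 2⌋₊ : ℝ)) (b := T) (f := F) (C := R) (fun s _ => hR s)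
    refine hb.trans ?_
    have l1 := Nat.floor_le (by positivity : 0 ≤ T / 2)
    have l2 := Nat.lt_floor_add_one (T / 2)
    rw [abs_of_nonneg (by linarith)]
    nlinarith
  have h5 := h3.add h4
  have e : (β + β) * 1 / 2 + 0 = β := by ring
  rw [e] at h5
  refine h5.congr' ?_
  filter_upwards [eventually_ge_atTop 2] with T hT
  have hn : (⌊T / 2⌋₊ : ℝ) ≠ 0 := by
    have : 1 ≤ ⌊T / 2⌋₊ := Nat.le_floor (by push_cast; linarith)
    positivity
  rw [← intervalIntegral.integral_add_adjacent_intervals (hF 0 (2 * (⌊T / 2⌋₊ : ℝ)))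
    (hF (2 * (⌊T / 2⌋₊ : ℝ)) T)]
  simp only [Function.comp]
  field_simp

lemma avg_of_blocks_neg {F : ℝ → ℝ} {R β : ℝ} (hF : ∀ a b, IntervalIntegrable F volume a b)
    (hR : ∀ s, |F s| ≤ R)
    (he : Tendsto (fun n : ℕ => (∑ i ∈ Finset.range n,
      ∫ s in (-(2 * (i:ℝ)) - 1)..(-(2 * (i:ℝ))), F s) / n) atTop (𝓝 β))
    (ho : Tendsto (fun n : ℕ => (∑ i ∈ Finset.range n,
      ∫ s in (-(2 * (i:ℝ)) - 2)..(-(2 * (i:ℝ)) - 1), F s) / n) atTop (𝓝 β)) :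
    Tendsto (fun T => (∫ s in (0:ℝ)..T, F s) / T) atBot (𝓝 β) := by
  have h := avg_of_blocks (F := fun s => F (-s)) (R := R) (β := β)
    (fun a b => by
      have := (hF (-a) (-b)).comp_mul_left (c := -1)
      simpa using this) (fun s => hR _)
    (by
      refine he.congr fun n => ?_
      congr 1
      refine Finset.sum_congr rfl fun i _ => ?_
      rw [intervalIntegral.integral_comp_neg]
      congr 1; ring)
    (by
      refine ho.congr fun n => ?_
      congr 1
      refine Finset.sum_congr rfl fun i _ => ?_
      rw [intervalIntegral.integral_comp_neg]
      congr 1 <;> ring)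
  refine (h.comp tendsto_neg_atBot_atTop).congr fun T => ?_
  simp only [Function.comp]
  rw [intervalIntegral.integral_comp_neg, neg_neg, neg_zero, intervalIntegral.integral_symm, neg_div_neg_eq]

lemma lim_scale_top {V : ℝ → ℝ} {β : ℝ} (h0 : V 0 = 0)
    (h : Tendsto (fun T => V T / T) atTop (𝓝 β)) {y : ℝ} (hy : 0 ≤ y) :
    Tendsto (fun t => V (t * y) / t) atTop (𝓝 (β * y)) := by
  rcases eq_or_lt_of_le hy with rfl | hy
  · simp [h0]
  · refine ((h.comp (tendsto_id.atTop_mul_const hy)).mul_const y).congr' ?_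
    filter_upwards [eventually_gt_atTop 0] with t ht
    simp only [Function.comp, id]
    field_simp

lemma lim_scale_bot {V : ℝ → ℝ} {β : ℝ} (h0 : V 0 = 0)
    (h : Tendsto (fun T => V T / T) atBot (𝓝 β)) {y : ℝ} (hy : y ≤ 0) :
    Tendsto (fun t => V (t * y) / t) atTop (𝓝 (β * y)) := by
  rcases eq_or_lt_of_le hy with rfl | hy
  · simp [h0]
  · refine ((h.comp (tendsto_id.atTop_mul_const_of_neg hy)).mul_const y).congr' ?_
    filter_upwards [eventually_gt_atTop 0] with t ht
    simp only [Function.comp, id]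
    field_simp [hy.ne]

/-! ### Probabilistic part -/

/-- Random Hamiltonians for which everything works. -/
structure GH [MeasurableSpace Ω] (G : ℝ → ℝ → Ω → ℝ) : Prop where
  meas : ∀ p y, Measurable (G p y)
  det : ∀ ω, DH fun p y => G p y ω
  coer : ∀ M : ℝ, ∃ R : ℝ, ∀ (p y : ℝ) (ω : Ω), R ≤ |p| → M ≤ G p y ω

lemma genSigma_meas [MeasurableSpace Ω] (G : ℝ → ℝ → Ω → ℝ) {U : Set ℝ} (p : ℝ) {y : ℝ}
    (hy : y ∈ U) : Measurable[genSigma G U] (G p y) := by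
  have h : MeasurableSpace.comap (G p y) inferInstance ≤ genSigma G U :=
    le_iSup₂_of_le y hy (le_iSup_of_le p le_rfl)
  exact Measurable.mono (comap_measurable _) h le_rfl

lemma genSigma_le [m : MeasurableSpace Ω] {G : ℝ → ℝ → Ω → ℝ} (h : GH G) (U : Set ℝ) :
    genSigma G U ≤ m :=
  iSup₂_le fun y _ => iSup_le fun p => (h.meas p y).comap_le

/-- Joint measurability of the slope. -/
lemma bsl_joint {m : MeasurableSpace Ω} {G : ℝ → ℝ → Ω → ℝ} (hdet : ∀ ω, DH fun p y => G p y ω)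
    {μ R : ℝ} (hR : ∀ (p y : ℝ) (ω : Ω), R ≤ |p| → μ + 1 ≤ G p y ω)
    (c : ℝ → ℝ) (hc : Continuous c) (hm : ∀ p s, Measurable (G p (c s))) :
    Measurable (fun q : ℝ × Ω => bsl (fun p y => G p y q.2) μ (c q.1)) := by
  refine measurable_of_Ici fun p => ?_
  rcases le_or_gt p 0 with hp | hp
  · convert MeasurableSet.univ
    ext q
    simp only [mem_preimage, mem_Ici, mem_univ, iff_true]
    exact hp.trans (bsl_nonneg (hdet q.2) (fun p y => hR p y q.2) _)
  · have hj : Measurable (Function.uncurry fun s ω => G p (c s) ω) :=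
      measurable_uncurry_of_continuous_of_measurable
        (fun ω => ((hdet ω).cont_y p).comp hc) (hm p)
    have : (fun q : ℝ × Ω => bsl (fun p y => G p y q.2) μ (c q.1)) ⁻¹' Ici p =
        Function.uncurry (fun s ω => G p (c s) ω) ⁻¹' Iic μ := by
      ext q
      simp only [mem_preimage, mem_Ici, mem_Iic]
      exact le_bsl_iff (hdet q.2) (fun p y => hR p y q.2) hp
    rw [this]
    exact hj measurableSet_Iic

lemma block_meas {m : MeasurableSpace Ω} {G : ℝ → ℝ → Ω → ℝ} (hdet : ∀ ω, DH fun p y => G p y ω)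
    {μ R : ℝ} (hR : ∀ (p y : ℝ) (ω : Ω), R ≤ |p| → μ + 1 ≤ G p y ω)
    (a b : ℝ) (hab : a ≤ b) (hm : ∀ p, ∀ s ∈ Icc a b, Measurable (G p s)) :
    Measurable (fun ω => ∫ s in a..b, bsl (fun p y => G p y ω) μ s) := by
  have hj := bsl_joint hdet hR (fun s => (projIcc a b hab s : ℝ)) (by fun_prop)
    (fun p s => hm p _ (projIcc a b hab s).2)
  have h1 := (StronglyMeasurable.integral_prod_left (μ := volume.restrict (Ioc a b))
    (f := fun s ω => bsl (fun p y => G p y ω) μ (projIcc a b hab s : ℝ))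
    hj.stronglyMeasurable).measurable
  convert h1 using 2 with ω
  rw [intervalIntegral.integral_of_le hab]
  refine setIntegral_congr_fun measurableSet_Ioc fun s hs => ?_
  simp only [projIcc_of_mem hab (Ioc_subset_Icc_self hs)]

lemma avg_ae [MeasurableSpace Ω] {P : Measure Ω} [IsProbabilityMeasure P] {τ : ℝ → Ω → Ω}
    (hτ : ∀ z, MeasurePreserving (τ z) P P) {G : ℝ → ℝ → Ω → ℝ} (hG : GH G)
    (hst : Stationary τ G) (hdep : UnitRangeDep P G) (μ : ℝ) :
    ∃ β : ℝ, ∀ᵐ ω ∂P,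
      Tendsto (fun T => (∫ s in (0:ℝ)..T, bsl (fun p y => G p y ω) μ s) / T) atTop (𝓝 β) ∧
      Tendsto (fun T => (∫ s in (0:ℝ)..T, bsl (fun p y => G p y ω) μ s) / T) atBot (𝓝 β) := by
  obtain ⟨R, hR⟩ := hG.coer (μ + 1)
  set X : ℝ → Ω → ℝ := fun k ω => ∫ s in k..(k + 1), bsl (fun p y => G p y ω) μ s with hX
  have hXm : ∀ k, Measurable[genSigma G (Icc k (k + 1))] (X k) := fun k =>
    block_meas (m := genSigma G (Icc k (k + 1))) hG.det hR k (k + 1) (by linarith)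
      fun p s hs => genSigma_meas G p hs
  have hXm' : ∀ k, Measurable (X k) := fun k => (hXm k).mono (genSigma_le hG _) le_rfl
  have hXs : ∀ k, X k = fun ω => X 0 (τ k ω) := by
    intro k
    funext ω
    simp only [hX]
    have h1 := intervalIntegral.integral_comp_add_right (a := 0) (b := 1)
      (fun s => bsl (fun p y => G p y ω) μ s) k
    rw [zero_add, add_comm 1 k] at h1
    rw [← h1, zero_add]
    congr 1
    funext s
    have hsk : ∀ p, G p (s + k) ω = G p s (τ k ω) := fun p => hst p s k ω
    simp only [bsl, hsk]
  have hXb : ∀ k ω, ‖X k ω‖ ≤ |R| := by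
    intro k ω
    have := intervalIntegral.norm_integral_le_of_norm_le_const (a := k) (b := k + 1)
      (f := fun s => bsl (fun p y => G p y ω) μ s) (C := |R|) (fun s _ => by
        rw [Real.norm_of_nonneg (bsl_nonneg (hG.det ω) (fun p y => hR p y ω) s)]
        exact bsl_le (hG.det ω) (fun p y => hR p y ω) s)
    simpa using this
  have hint : ∀ k, Integrable (X k) P := fun k =>
    Integrable.of_bound (hXm' k).aestronglyMeasurable |R| (ae_of_all _ (hXb k))
  have hid : ∀ k l, IdentDistrib (X k) (X l) P P := by
    have hid0 : ∀ k, IdentDistrib (X k) (X 0) P P := by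
      intro k
      refine ⟨(hXm' k).aemeasurable, (hXm' 0).aemeasurable, ?_⟩
      rw [hXs k]
      have := Measure.map_map (μ := P) (hXm' 0) (hτ k).measurable
      rw [(hτ k).map_eq] at this
      exact this.symm
    exact fun k l => (hid0 k).trans (hid0 l).symm
  have hind : ∀ k l, 2 ≤ |k - l| → IndepFun (X k) (X l) P := by
    intro k l hkl
    rw [IndepFun_iff_Indep]
    have := hdep (Icc k (k + 1)) (Icc l (l + 1)) measurableSet_Icc measurableSet_Icc (by
      intro x hx y hy
      rcases le_abs.1 hkl with h | h
      · exact le_abs.2 (Or.inl (by linarith [hx.1, hy.2]))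
      · exact le_abs.2 (Or.inr (by linarith [hx.2, hy.1])))
    exact indep_of_indep_of_le_left (indep_of_indep_of_le_right this (hXm l).comap_le)
      (hXm k).comap_le
  have slln : ∀ e : ℕ → ℝ, (∀ i j, i ≠ j → 2 ≤ |e i - e j|) →
      ∀ᵐ ω ∂P, Tendsto (fun n : ℕ => (∑ i ∈ Finset.range n, X (e i) ω) / n) atTop
        (𝓝 (∫ ω, X 0 ω ∂P)) := by
    intro e he
    have := strong_law_ae_real (μ := P) (fun i => X (e i)) (hint _)
      (fun i j hij => hind _ _ (he i j hij)) (fun i => hid _ _)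
    rw [(hid (e 0) 0).integral_eq] at this
    exact this
  have habs : ∀ i j : ℕ, i ≠ j → (2:ℝ) ≤ |2 * (i:ℝ) - 2 * j| := by
    intro i j hij
    rcases lt_or_gt_of_ne hij with h | h
    · have : (i:ℝ) + 1 ≤ j := by exact_mod_cast h
      exact le_abs.2 (Or.inr (by linarith))
    · have : (j:ℝ) + 1 ≤ i := by exact_mod_cast h
      exact le_abs.2 (Or.inl (by linarith))
  refine ⟨∫ ω, X 0 ω ∂P, ?_⟩
  have s1 := slln (fun i => 2 * (i:ℝ)) habs
  have s2 := slln (fun i => 2 * (i:ℝ) + 1) (fun i j hij => by simpa using habs i j hij)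
  have s3 := slln (fun i => -(2 * (i:ℝ)) - 1) (fun i j hij => by
    have := habs j i hij.symm
    rw [show -(2 * (i:ℝ)) - 1 - (-(2 * (j:ℝ)) - 1) = 2 * (j:ℝ) - 2 * i by ring]; exact this)
  have s4 := slln (fun i => -(2 * (i:ℝ)) - 2) (fun i j hij => by
    have := habs j i hij.symm
    rw [show -(2 * (i:ℝ)) - 2 - (-(2 * (j:ℝ)) - 2) = 2 * (j:ℝ) - 2 * i by ring]; exact this)
  filter_upwards [s1, s2, s3, s4] with ω h1 h2 h3 h4
  have hbm : Measurable (bsl (fun p y => G p y ω) μ) := by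
    have hj := bsl_joint hG.det hR id continuous_id (fun p s => hG.meas p s)
    exact hj.comp (by fun_prop : Measurable fun s : ℝ => (s, ω))
  have hbR : ∀ s, |bsl (fun p y => G p y ω) μ s| ≤ |R| := fun s => by
    rw [abs_of_nonneg (bsl_nonneg (hG.det ω) (fun p y => hR p y ω) s)]
    exact bsl_le (hG.det ω) (fun p y => hR p y ω) s
  have hII : ∀ a b, IntervalIntegrable (bsl (fun p y => G p y ω) μ) volume a b := fun a b =>
    (intervalIntegrable_const (c := |R|)).mono_fun hbm.aestronglyMeasurable
      (ae_of_all _ fun s => by simpa using hbR s)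
  constructor
  · refine avg_of_blocks hII hbR h1 ?_
    refine h2.congr fun n => ?_
    simp only [hX, add_assoc]
    norm_num
  · refine avg_of_blocks_neg hII hbR ?_ ?_
    · simpa only [hX, sub_add_cancel] using h3
    · refine h4.congr fun n => ?_
      congr 1
      refine Finset.sum_congr rfl fun i _ => ?_
      simp only [hX]
      congr 1
      ring

lemma core [MeasurableSpace Ω] {P : Measure Ω} [IsProbabilityMeasure P] {τ : ℝ → Ω → Ω}
    (hτ : ∀ z, MeasurePreserving (τ z) P P) {G : ℝ → ℝ → Ω → ℝ} (hG : GH G)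
    (hst : Stationary τ G) (hdep : UnitRangeDep P G) {m μ y1 p : ℝ} (hm : m < μ)
    (h1 : ∀ᵐ ω ∂P, G 0 y1 ω ≤ m) {Hb : ℝ → ℝ} (hHb : ∀ᵐ ω ∂P, ∀ p, effectiveHam G ω p = Hb p)
    (hp : 0 ≤ p) (hHp : Hb p = μ) :
    ∀ᵐ ω ∂P, (∀ y, G 0 y ω ≤ m) ∧
      Tendsto (fun T => (∫ s in (0:ℝ)..T, bsl (fun p y => G p y ω) μ s) / T) atTop (𝓝 p) ∧
      Tendsto (fun T => (∫ s in (0:ℝ)..T, bsl (fun p y => G p y ω) μ s) / T) atBot (𝓝 p) := by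
  obtain ⟨R, hR⟩ := hG.coer (μ + 1)
  obtain ⟨β, hβ⟩ := avg_ae hτ hG hst hdep μ
  have hq : ∀ᵐ ω ∂P, ∀ q : ℚ, G 0 (q:ℝ) ω ≤ m := by
    rw [ae_all_iff]
    intro q
    have := (hτ (q - y1)).quasiMeasurePreserving.ae h1
    filter_upwards [this] with ω hω
    rw [← hst] at hω
    simpa using hω
  filter_upwards [hβ, hq, hHb] with ω hω hqω hbω
  have h0 : ∀ y, G 0 y ω ≤ m := by
    have hcl : IsClosed {y | G 0 y ω ≤ m} := isClosed_le ((hG.det ω).cont_y 0) continuous_const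
    have hd : Dense {y | G 0 y ω ≤ m} := Rat.isDenseEmbedding_coe_real.dense.mono (by
      rintro _ ⟨q, rfl⟩
      exact hqω q)
    intro y
    have := hcl.closure_eq ▸ hd y
    exact this
  have e := effective_slope (hG.det ω) hm h0 (fun p y => hR p y ω) hp
    ((hbω p).trans hHp) hω.1 hω.2
  rw [e]
  exact ⟨h0, hω⟩

lemma plus_right [MeasurableSpace Ω] {P : Measure Ω} [IsProbabilityMeasure P] {τ : ℝ → Ω → Ω}
    (hτ : ∀ z, MeasurePreserving (τ z) P P) {G H : ℝ → ℝ → Ω → ℝ} (hG : GH G) (hH : GH H)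
    (hst : Stationary τ G) (hdep : UnitRangeDep P G) {m μ p R0 : ℝ} (hm : m < μ)
    (hag : ∀ p y ω, R0 ≤ y → H p y ω = G p y ω)
    {Hb : ℝ → ℝ} (hHb : ∀ᵐ ω ∂P, ∀ p, effectiveHam G ω p = Hb p)
    (hp : 0 ≤ p) (hHp : Hb p = μ) {mbar : ℝ → ℝ → ℝ}
    (hconv : ∀ᵐ ω ∂P, (∀ y, H 0 y ω ≤ m) ∧ ∀ x y : ℝ,
      Tendsto (fun t : ℝ => metricSol H μ ω (t * y) (t * x) / t) atTop (𝓝 (mbar y x)))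
    {x y : ℝ} (hx : 0 ≤ x) (hxy : x ≤ y) : mbar y x = p * (y - x) := by
  obtain ⟨R, hR⟩ := hH.coer (μ + 1)
  obtain ⟨R', hR'⟩ := hG.coer (μ + 1)
  have h1 : ∀ᵐ ω ∂P, G 0 R0 ω ≤ m := by
    filter_upwards [hconv] with ω hω
    rw [← hag 0 R0 ω le_rfl]; exact hω.1 R0
  have hcore := core hτ hG hst hdep hm h1 hHb hp hHp
  obtain ⟨ω, ⟨h0, hlim⟩, hG0, ht, -⟩ := (hconv.and hcore).exists
  have hcH := bsl_cont (hH.det ω) (fun p y => hR p y ω) hm h0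
  have hcG := bsl_cont (hG.det ω) (fun p y => hR' p y ω) hm hG0
  set bH := bsl (fun p y => H p y ω) μ with hbH
  set bG := bsl (fun p y => G p y ω) μ with hbG
  have hbb : ∀ s, R0 ≤ s → bH s = bG s := by
    intro s hs
    simp only [hbH, hbG, bsl]
    simp only [hag _ s ω hs]
  set V : ℝ → ℝ := fun T => ∫ s in (0:ℝ)..T, bH s with hV
  have hVlim : Tendsto (fun T => V T / T) atTop (𝓝 p) := by
    have h2 : Tendsto (fun T : ℝ => (∫ s in (0:ℝ)..T, bG s) / T +
        ((∫ s in (0:ℝ)..R0, bH s) - ∫ s in (0:ℝ)..R0, bG s) * T⁻¹) atTop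
        (𝓝 (p + ((∫ s in (0:ℝ)..R0, bH s) - ∫ s in (0:ℝ)..R0, bG s) * 0)) :=
      ht.add (tendsto_inv_atTop_zero.const_mul _)
    rw [mul_zero, add_zero] at h2
    refine h2.congr' ?_
    filter_upwards [eventually_ge_atTop R0] with T hT
    have i1 := intervalIntegral.integral_add_adjacent_intervals
      (hcH.intervalIntegrable (μ := volume) 0 R0) (hcH.intervalIntegrable R0 T)
    have i2 := intervalIntegral.integral_add_adjacent_intervals
      (hcG.intervalIntegrable (μ := volume) 0 R0) (hcG.intervalIntegrable R0 T)
    have i3 : ∫ s in R0..T, bH s = ∫ s in R0..T, bG s :=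
      intervalIntegral.integral_congr fun s hs => by
        rw [uIcc_of_le hT] at hs
        exact hbb s hs.1
    simp only [hV]
    rw [← i1, ← i2, i3]
    ring
  have hV0 : V 0 = 0 := by simp [hV]
  have hl := (lim_scale_top hV0 hVlim (hx.trans hxy)).sub (lim_scale_top hV0 hVlim hx)
  have hu := tendsto_nhds_unique (hlim x y) (hl.congr' (by
    filter_upwards [eventually_gt_atTop 0] with t ht
    rw [metricSol_eq (hH.det ω) hm h0 (fun p y => hR p y ω) (mul_le_mul_of_nonneg_left hxy ht.le),
      ← sub_div]
    congr 1
    exact intervalIntegral.integral_interval_sub_left (hcH.intervalIntegrable _ _)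
      (hcH.intervalIntegrable _ _)))
  rw [hu]; ring

lemma plus_left [MeasurableSpace Ω] {P : Measure Ω} [IsProbabilityMeasure P] {τ : ℝ → Ω → Ω}
    (hτ : ∀ z, MeasurePreserving (τ z) P P) {G H : ℝ → ℝ → Ω → ℝ} (hG : GH G) (hH : GH H)
    (hst : Stationary τ G) (hdep : UnitRangeDep P G) {m μ p R0 : ℝ} (hm : m < μ)
    (hag : ∀ p y ω, y ≤ R0 → H p y ω = G p y ω)
    {Hb : ℝ → ℝ} (hHb : ∀ᵐ ω ∂P, ∀ p, effectiveHam G ω p = Hb p)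
    (hp : 0 ≤ p) (hHp : Hb p = μ) {mbar : ℝ → ℝ → ℝ}
    (hconv : ∀ᵐ ω ∂P, (∀ y, H 0 y ω ≤ m) ∧ ∀ x y : ℝ,
      Tendsto (fun t : ℝ => metricSol H μ ω (t * y) (t * x) / t) atTop (𝓝 (mbar y x)))
    {x y : ℝ} (hy : y ≤ 0) (hxy : x ≤ y) : mbar y x = p * (y - x) := by
  obtain ⟨R, hR⟩ := hH.coer (μ + 1)
  obtain ⟨R', hR'⟩ := hG.coer (μ + 1)
  have h1 : ∀ᵐ ω ∂P, G 0 R0 ω ≤ m := by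
    filter_upwards [hconv] with ω hω
    rw [← hag 0 R0 ω le_rfl]; exact hω.1 R0
  have hcore := core hτ hG hst hdep hm h1 hHb hp hHp
  obtain ⟨ω, ⟨h0, hlim⟩, hG0, -, ht⟩ := (hconv.and hcore).exists
  have hcH := bsl_cont (hH.det ω) (fun p y => hR p y ω) hm h0
  have hcG := bsl_cont (hG.det ω) (fun p y => hR' p y ω) hm hG0
  set bH := bsl (fun p y => H p y ω) μ with hbH
  set bG := bsl (fun p y => G p y ω) μ with hbG
  have hbb : ∀ s, s ≤ R0 → bH s = bG s := by
    intro s hs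
    simp only [hbH, hbG, bsl]
    simp only [hag _ s ω hs]
  set V : ℝ → ℝ := fun T => ∫ s in (0:ℝ)..T, bH s with hV
  have hVlim : Tendsto (fun T => V T / T) atBot (𝓝 p) := by
    have h2 : Tendsto (fun T : ℝ => (∫ s in (0:ℝ)..T, bG s) / T +
        ((∫ s in (0:ℝ)..R0, bH s) - ∫ s in (0:ℝ)..R0, bG s) * T⁻¹) atBot
        (𝓝 (p + ((∫ s in (0:ℝ)..R0, bH s) - ∫ s in (0:ℝ)..R0, bG s) * 0)) :=
      ht.add (tendsto_inv_atBot_zero.const_mul _)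
    rw [mul_zero, add_zero] at h2
    refine h2.congr' ?_
    filter_upwards [eventually_le_atBot R0] with T hT
    have i1 := intervalIntegral.integral_add_adjacent_intervals
      (hcH.intervalIntegrable (μ := volume) 0 R0) (hcH.intervalIntegrable R0 T)
    have i2 := intervalIntegral.integral_add_adjacent_intervals
      (hcG.intervalIntegrable (μ := volume) 0 R0) (hcG.intervalIntegrable R0 T)
    have i3 : ∫ s in R0..T, bH s = ∫ s in R0..T, bG s :=
      intervalIntegral.integral_congr fun s hs => by
        rw [uIcc_of_ge hT] at hs
        exact hbb s hs.2
    simp only [hV]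
    rw [← i1, ← i2, i3]
    ring
  have hV0 : V 0 = 0 := by simp [hV]
  have hl := (lim_scale_bot hV0 hVlim hy).sub (lim_scale_bot hV0 hVlim (hxy.trans hy))
  have hu := tendsto_nhds_unique (hlim x y) (hl.congr' (by
    filter_upwards [eventually_gt_atTop 0] with t ht
    rw [metricSol_eq (hH.det ω) hm h0 (fun p y => hR p y ω) (mul_le_mul_of_nonneg_left hxy ht.le),
      ← sub_div]
    congr 1
    exact intervalIntegral.integral_interval_sub_left (hcH.intervalIntegrable _ _)
      (hcH.intervalIntegrable _ _)))
  rw [hu]; ring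

/-! ### Reflection -/

/-- Reflected Hamiltonian. -/
def hrefl (G : ℝ → ℝ → Ω → ℝ) : ℝ → ℝ → Ω → ℝ := fun p y ω => G (-p) (-y) ω

lemma subsol_refl {G : ℝ → ℝ → ℝ} {μ : ℝ} {u : ℝ → ℝ} (h : IsViscSubsol G μ univ u) :
    IsViscSubsol (fun p y => G (-p) (-y)) μ univ (fun y => u (-y)) := by
  intro φ hφ y _ hmax
  rw [isLocalMaxOn_univ_iff] at hmax
  have hφ' : ContDiff ℝ 1 (fun s => φ (-s)) := hφ.comp contDiff_neg
  have h1 := h _ hφ' (-y) (mem_univ _) (by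
    rw [isLocalMaxOn_univ_iff]
    have ht : Tendsto (fun s : ℝ => -s) (𝓝 (-y)) (𝓝 y) := by
      have := (continuous_neg (G := ℝ)).tendsto (-y)
      simpa using this
    filter_upwards [ht.eventually hmax] with s hs
    simpa using hs)
  have h2 : deriv (fun s => φ (-s)) (-y) = -deriv φ y := by
    rw [deriv_comp_neg, neg_neg]
  rw [h2] at h1
  exact h1

lemma lip_refl {u : ℝ → ℝ} (h : IsLip u) : IsLip (fun y => u (-y)) := by
  obtain ⟨K, hK⟩ := h
  refine ⟨K, LipschitzWith.of_dist_le_mul fun x y => ?_⟩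
  have := hK.dist_le_mul (-x) (-y)
  rwa [dist_neg_neg] at this

lemma hrefl_hrefl (G : ℝ → ℝ → Ω → ℝ) : hrefl (hrefl G) = G := by
  funext p y ω; simp [hrefl]

lemma metricSol_refl (H : ℝ → ℝ → Ω → ℝ) (μ : ℝ) (ω : Ω) (y x : ℝ) :
    metricSol (hrefl H) μ ω y x = metricSol H μ ω (-y) (-x) := by
  unfold metricSol
  congr 1
  ext r
  constructor
  · rintro ⟨v, hv, hs, rfl⟩
    refine ⟨fun y => v (-y), lip_refl hv, ?_, by simp⟩
    have := subsol_refl hs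
    simpa [hrefl] using this
  · rintro ⟨v, hv, hs, rfl⟩
    exact ⟨fun y => v (-y), lip_refl hv, subsol_refl hs, rfl⟩

lemma effective_refl_aux {H : ℝ → ℝ → Ω → ℝ} {ω : Ω} {p μ : ℝ}
    (h : ∃ v : ℝ → ℝ, IsLip v ∧ Tendsto (fun y => v y / |y|) (cocompact ℝ) (𝓝 0) ∧
      IsViscSubsol (fun q y => H q y ω) μ Set.univ fun y => p * y + v y) :
    ∃ v : ℝ → ℝ, IsLip v ∧ Tendsto (fun y => v y / |y|) (cocompact ℝ) (𝓝 0) ∧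
      IsViscSubsol (fun q y => hrefl H q y ω) μ Set.univ fun y => -p * y + v y := by
  obtain ⟨v, hv, ht, hs⟩ := h
  refine ⟨fun y => v (-y), lip_refl hv, ?_, ?_⟩
  · have := ht.comp (Homeomorph.neg ℝ).isClosedEmbedding.tendsto_cocompact
    refine this.congr fun y => ?_
    simp
  · have := subsol_refl hs
    simpa [hrefl] using this

lemma effective_refl (H : ℝ → ℝ → Ω → ℝ) (ω : Ω) (p : ℝ) :
    effectiveHam (hrefl H) ω p = effectiveHam H ω (-p) := by
  unfold effectiveHam
  congr 1
  ext ν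
  constructor
  · intro h
    have := effective_refl_aux h
    rwa [hrefl_hrefl] at this
  · intro h
    have := effective_refl_aux h
    rwa [neg_neg] at this

lemma GH.refl [MeasurableSpace Ω] {G : ℝ → ℝ → Ω → ℝ} (h : GH G) : GH (hrefl G) where
  meas p y := h.meas _ _
  coer M := by
    obtain ⟨R, hR⟩ := h.coer M
    exact ⟨R, fun p y ω hp => hR _ _ _ (by rwa [abs_neg])⟩
  det ω :=
    { cont := (h.det ω).cont.comp (by fun_prop : Continuous fun q : ℝ × ℝ => (-q.1, -q.2))
      conv := fun y => by
        refine ⟨convex_univ, fun p _ q _ a b ha hb hab => ?_⟩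
        have := ((h.det ω).conv (-y)).2 (mem_univ (-p)) (mem_univ (-q)) ha hb hab
        have e : -(a • p + b • q) = a • (-p) + b • (-q) := by simp; ring
        simp only [hrefl]
        rw [e]
        exact this
      mn := fun p y => by
        simp only [hrefl, neg_zero]
        exact (h.det ω).mn _ _
      lower := by
        obtain ⟨c, hc⟩ := (h.det ω).lower
        exact ⟨c, fun y => by simpa [hrefl] using hc (-y)⟩
      upper := fun p => by
        obtain ⟨C, hC⟩ := (h.det ω).upper (-p)
        exact ⟨C, fun y => hC (-y)⟩ }

lemma stationary_refl {τ : ℝ → Ω → Ω} {G : ℝ → ℝ → Ω → ℝ} (h : Stationary τ G) :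
    Stationary (fun z => τ (-z)) (hrefl G) := by
  intro p y z ω
  simp only [hrefl]
  rw [neg_add, h]

lemma dep_refl [MeasurableSpace Ω] {P : Measure Ω} {G : ℝ → ℝ → Ω → ℝ} (h : UnitRangeDep P G) :
    UnitRangeDep P (hrefl G) := by
  have hle : ∀ U : Set ℝ, genSigma (hrefl G) U ≤ genSigma G ((fun y => -y) ⁻¹' U) := by
    intro U
    refine iSup₂_le fun y hy => iSup_le fun p => ?_
    exact (genSigma_meas G (-p) (y := -y) (by simpa using hy)).comap_le
  intro U V hU hV hd
  refine indep_of_indep_of_le_left (indep_of_indep_of_le_right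
    (h _ _ (measurable_neg hU) (measurable_neg hV) ?_) (hle V)) (hle U)
  intro x hx y hy
  have := hd _ hx _ hy
  rw [← abs_neg] at this
  convert this using 2
  ring

lemma HamHyp.gh [MeasurableSpace Ω] {H : ℝ → ℝ → Ω → ℝ} (h : HamHyp H) : GH H where
  meas p y := h.meas.comp (by fun_prop : Measurable fun ω : Ω => (p, y, ω))
  coer := h.coercive
  det ω :=
    { cont := by
        obtain ⟨K, hK⟩ := h.lip_p
        obtain ⟨w, -, hw0, hwc, hw⟩ := h.modulus
        refine continuous_prod_of_continuous_lipschitzWith _ K (fun p => ?_) (fun y => hK y ω)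
        rw [continuous_iff_continuousAt]
        intro x
        rw [ContinuousAt, tendsto_iff_dist_tendsto_zero]
        have ht : Tendsto (fun y => w (|x - y| * (1 + |p|))) (𝓝 x) (𝓝 0) := by
          have hc : Tendsto (fun y => |x - y| * (1 + |p|)) (𝓝 x) (𝓝 0) := by
            have : Continuous fun y => |x - y| * (1 + |p|) := by fun_prop
            simpa using this.tendsto x
          have := hwc.tendsto.comp hc
          rwa [hw0] at this
        exact squeeze_zero (fun _ => dist_nonneg) (fun y => hw p x y ω) ht
      conv := fun y => h.convex_p y ω
      mn := fun p y => h.min_at_zero p y ω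
      lower := by
        obtain ⟨c, C, γ, -, -, -, hb⟩ := h.bounds
        exact ⟨_, fun y => (hb 0 y ω).1⟩
      upper := fun p => by
        obtain ⟨c, C, γ, -, -, -, hb⟩ := h.bounds
        exact ⟨_, fun y => (hb p y ω).2⟩ }

lemma flux_bound {H : ℝ → ℝ → Ω → ℝ} {ω : Ω} (h : DH fun p y => H p y ω) (y : ℝ) :
    H 0 y ω ≤ fluxLimiter H ω := by
  refine le_csInf ?_ ?_
  · obtain ⟨C, hC⟩ := h.upper 0
    refine ⟨C, fun _ => 0, ⟨0, LipschitzWith.const 0⟩, ?_⟩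
    intro φ hφ y _ hmax
    rw [isLocalMaxOn_univ_iff] at hmax
    have h1 := (hasDerivAt_const y (0:ℝ)).sub ((hφ.differentiable one_ne_zero) y).hasDerivAt
    have h2 := hmax.hasDerivAt_eq_zero h1
    have : deriv φ y = 0 := by linarith
    rw [this]
    exact hC y
  · rintro ν ⟨v, hv, hs⟩
    exact subsol_zero_le h hv hs y

/-- for `x ≥ 0, y > 0` (resp. `x ≤ 0, y < 0`) the homogenized metric
`m̄_μ(y,x)` only depends on `y - x` and is given by the slopes `p̄_μ^{R,±}`
(resp. `p̄_μ^{L,±}`) of the effective Hamiltonians at level `μ`. -/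
theorem homogenized_metric_formula [MeasurableSpace Ω]
    (P : Measure Ω) [IsProbabilityMeasure P]
    (τ : ℝ → Ω → Ω) (hτ : ErgodicSetup P τ)
    (HL HR H0 H : ℝ → ℝ → Ω → ℝ)
    (hHL : HamHyp HL) (hHR : HamHyp HR) (hH0 : HamHyp H0) (hH : HamHyp H)
    (hstatL : Stationary τ HL) (hstatR : Stationary τ HR) (hstat0 : Stationary τ H0)
    (hdepL : UnitRangeDep P HL) (hdepR : UnitRangeDep P HR) (hdep0 : UnitRangeDep P H0)
    (hdecomp :
      (∃ φ : ℝ → ℝ, ContDiff ℝ (⊤ : ℕ∞) φ ∧ Antitone φ ∧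
        (∀ y : ℝ, y ≤ -1 → φ y = 1) ∧ (∀ y : ℝ, 1 ≤ y → φ y = 0) ∧
        ∀ (p y : ℝ) (ω : Ω), H p y ω = φ y * HL p y ω + (1 - φ y) * HR p y ω) ∨
      (∃ ε : ℝ, 0 < ε ∧
        (∀ (p y : ℝ) (ω : Ω), HL p y ω ≤ H0 p y ω ∧ HR p y ω ≤ H0 p y ω) ∧
        ∃ ψ : ℝ → ℝ, ContDiff ℝ (⊤ : ℕ∞) ψ ∧
          (∀ y : ℝ, 2 / Real.sqrt ε < y → ψ y = 1) ∧
          (∀ y : ℝ, y < 1 / Real.sqrt ε → ψ y = 0) ∧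
          ∀ (p y : ℝ) (ω : Ω), H p y ω =
            ψ (-y) * HL p y ω + (1 - ψ (-y)) * (1 - ψ y) * H0 p y ω + ψ y * HR p y ω))
    (Abar μ : ℝ) (hμ : Abar < μ)
    (mbar : ℝ → ℝ → ℝ)
    (Ω₀ : Set Ω) (hΩ₀meas : MeasurableSet Ω₀) (hΩ₀full : P Ω₀ = 1)
    (hconv : ∀ ω ∈ Ω₀, fluxLimiter H ω = Abar ∧ ∀ x y : ℝ,
      Tendsto (fun t : ℝ => metricSol H μ ω (t * y) (t * x) / t) atTop (𝓝 (mbar y x)))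
    (HbarL HbarR : ℝ → ℝ)
    (hHbarL : ∀ᵐ ω ∂P, ∀ p : ℝ, effectiveHam HL ω p = HbarL p)
    (hHbarR : ∀ᵐ ω ∂P, ∀ p : ℝ, effectiveHam HR ω p = HbarR p)
    (pRp pRm pLp pLm : ℝ)
    (hpRp : 0 ≤ pRp ∧ HbarR pRp = μ ∧ Hplus HbarR pRp = μ)
    (hpRm : pRm ≤ 0 ∧ HbarR pRm = μ ∧ Hminus HbarR pRm = μ)
    (hpLp : 0 ≤ pLp ∧ HbarL pLp = μ ∧ Hplus HbarL pLp = μ)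
    (hpLm : pLm ≤ 0 ∧ HbarL pLm = μ ∧ Hminus HbarL pLm = μ) :
    (∀ x y : ℝ, 0 ≤ x → 0 < y →
      mbar y x = if x ≤ y then pRp * (y - x) else pRm * (y - x)) ∧
    (∀ x y : ℝ, x ≤ 0 → y < 0 →
      mbar y x = if x ≤ y then pLp * (y - x) else pLm * (y - x)) := by
  have hfull : Ω₀ ∈ ae P := (mem_ae_iff_prob_eq_one hΩ₀meas).2 hΩ₀full
  have hgH := hH.gh
  have hag : ∃ R0 : ℝ, (∀ p y ω, R0 ≤ y → H p y ω = HR p y ω) ∧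
      (∀ p y ω, y ≤ -R0 → H p y ω = HL p y ω) := by
    rcases hdecomp with ⟨φ, -, -, h1, h2, h3⟩ | ⟨ε, hε, -, ψ, -, h1, h2, h3⟩
    · refine ⟨1, fun p y ω hy => ?_, fun p y ω hy => ?_⟩
      · rw [h3, h2 y hy]; ring
      · rw [h3, h1 y hy]; ring
    · have hs : 0 < Real.sqrt ε := Real.sqrt_pos.2 hε
      have hd1 : 0 < 1 / Real.sqrt ε := by positivity
      have hd2 : 0 < 2 / Real.sqrt ε := by positivity
      refine ⟨2 / Real.sqrt ε + 1, fun p y ω hy => ?_, fun p y ω hy => ?_⟩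
      · rw [h3, h1 y (by linarith), h2 (-y) (by linarith)]; ring
      · rw [h3, h1 (-y) (by linarith), h2 y (by linarith)]; ring
  obtain ⟨R0, hagR, hagL⟩ := hag
  have hc : ∀ᵐ ω ∂P, (∀ y, H 0 y ω ≤ Abar) ∧ ∀ x y : ℝ,
      Tendsto (fun t : ℝ => metricSol H μ ω (t * y) (t * x) / t) atTop (𝓝 (mbar y x)) := by
    filter_upwards [hfull] with ω hω
    refine ⟨fun y => ?_, (hconv ω hω).2⟩
    rw [← (hconv ω hω).1]
    exact flux_bound (hgH.det ω) y
  have hc' : ∀ᵐ ω ∂P, (∀ y, hrefl H 0 y ω ≤ Abar) ∧ ∀ x y : ℝ,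
      Tendsto (fun t : ℝ => metricSol (hrefl H) μ ω (t * y) (t * x) / t) atTop
        (𝓝 (mbar (-y) (-x))) := by
    filter_upwards [hc] with ω hω
    refine ⟨fun y => by simpa [hrefl] using hω.1 (-y), fun x y => ?_⟩
    refine (hω.2 (-x) (-y)).congr fun t => ?_
    rw [metricSol_refl, mul_neg, mul_neg]
  have href : ∀ {G : ℝ → ℝ → Ω → ℝ} {Hb : ℝ → ℝ}, (∀ᵐ ω ∂P, ∀ p, effectiveHam G ω p = Hb p) →
      ∀ᵐ ω ∂P, ∀ p, effectiveHam (hrefl G) ω p = (fun p => Hb (-p)) p := by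
    intro G Hb h
    filter_upwards [h] with ω hω p
    rw [effective_refl, hω]
  constructor
  · intro x y hx hy
    split_ifs with hxy
    · exact plus_right hτ.preserving hHR.gh hgH hstatR hdepR hμ hagR hHbarR hpRp.1 hpRp.2.1 hc
        hx hxy
    · push Not at hxy
      have := plus_left (fun z => hτ.preserving (-z)) hHR.gh.refl hgH.refl (stationary_refl hstatR)
        (dep_refl hdepR) hμ (R0 := -R0) (fun p y ω hy => hagR (-p) (-y) ω (by linarith))
        (href hHbarR) (p := -pRm) (by linarith [hpRm.1]) (by simpa using hpRm.2.1)
        (mbar := fun y x => mbar (-y) (-x)) hc' (x := -x) (y := -y) (by linarith) (by linarith)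
      simp only [neg_neg] at this
      rw [this]; ring
  · intro x y hx hy
    split_ifs with hxy
    · exact plus_left hτ.preserving hHL.gh hgH hstatL hdepL hμ hagL hHbarL hpLp.1 hpLp.2.1 hc
        hy.le hxy
    · push Not at hxy
      have := plus_right (fun z => hτ.preserving (-z)) hHL.gh.refl hgH.refl (stationary_refl hstatL)
        (dep_refl hdepL) hμ (R0 := R0) (fun p y ω hy => hagL (-p) (-y) ω (by linarith))
        (href hHbarL) (p := -pLm) (by linarith [hpLm.1]) (by simpa using hpLm.2.1)
        (mbar := fun y x => mbar (-y) (-x)) hc' (x := -x) (y := -y) (by linarith) (by linarith)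
      simp only [neg_neg] at this
      rw [this]; ring
end
end
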